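/- arXiv:2502.12773 — 4 statements merged into one kernel-verified Lean document; each statement's English description precedes it below -/
import Mathlib

section
/- Let G be a 3-edge-connected finite simple cubic graph on n vertices whose flow polynomial F(G,t) has only real roots. Then F(G,t) has 1 as a root of multiplicity exactly 1, has 2 as a root of multiplicity exactly 1, and every other root of F(G,t) is strictly greater than 5/2. -/
open Polynomial

/-- The flow polynomial of a finite simple graph `G`:
`F(G,t) = Σ_{Z ⊆ E(G)} (−1)^{m−|Z|} t^{|Z|+c(Z)−n}`, where `c(Z)` is the number of
connected components of the spanning subgraph with edge set `Z`. -/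
noncomputable def flowPoly {V : Type} [Fintype V] (G : SimpleGraph V) : Polynomial ℤ :=
  ∑ Z ∈ G.edgeSet.toFinite.toFinset.powerset,
    (-1 : ℤ) ^ (G.edgeSet.toFinite.toFinset.card - Z.card) •
      (X : Polynomial ℤ) ^
        (Z.card + Nat.card (SimpleGraph.fromEdgeSet (↑Z : Set (Sym2 V))).ConnectedComponent
          - Fintype.card V)

/-- The number of edges of `G`. -/
noncomputable def edgeCount {V : Type} [Fintype V] (G : SimpleGraph V) : ℕ :=
  G.edgeSet.toFinite.toFinset.card

/-!
Over a field of characteristic two a flow needs no orientation, and `F(G, q)` is the number of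
nowhere-zero flows for every power `q` of two. Deletion and contraction at an edge of a root vertex
show that, up to a sign, this number is `(q - 1) g(2 - q)` for a polynomial `g` with natural
coefficients; here a cut vertex contributes the factor `2 - q`, which is why `2 - q` is the right
variable. A nowhere-zero flow over `𝔽₂` cannot exist at a vertex of degree three, so `g = X h`, and
following 3-edge-connectivity through the recursion yields `h(0) ≥ 1`. Hence
`F(G, t) = ± (t - 1) (t - 2) h(2 - t)`, where the last factor has absolute value at least one for
`t ≤ 2`.

If all roots are real, then the roots `r` of the last factor are therefore greater than `2`, and
`∏ (r - 2) = h(0) ≥ 1`. By 3-edge-connectivity `F` starts with `t ^ d - m t ^ (d - 1)`, where `m` is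
the number of edges and `d = m - n + 1`, so the average of the numbers `r - 2` is one for a cubic
graph. Equality in the inequality of arithmetic and geometric means forces `r = 3` throughout.
-/

namespace FlowPolynomial

open Finset Function

variable {V : Type*} [DecidableEq V]

/-- The edges of `A` at the vertex `v`. -/
def edgesAt (A : Finset (Sym2 V)) (v : V) : Finset (Sym2 V) := {e ∈ A | v ∈ e}

@[simp]
lemma mem_edgesAt {A : Finset (Sym2 V)} {v : V} {e : Sym2 V} :
    e ∈ edgesAt A v ↔ e ∈ A ∧ v ∈ e := mem_filter

lemma card_filter_mem_of_forall_mem {U : Finset V} {e : Sym2 V} (he : ¬e.IsDiag)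
    (h : ∀ u ∈ e, u ∈ U) : #{u ∈ U | u ∈ e} = 2 := by
  rw [← Sym2.card_toFinset_of_not_isDiag e he]
  congr 1
  ext u
  simpa using h u

lemma eq_and_eq_of_piecewise_smul_eq {α K : Type*} [DecidableEq α] [Field K] {F : Finset α}
    {e f : α} {c d : K} {φ ψ : α → K} (hc : c ≠ 0) (he : e ∈ F) (hf : f ∉ F)
    (hφ : φ e = φ f) (hψ : ψ e = ψ f) (hφf : φ f ≠ 0)
    (h : F.piecewise (c • φ) φ = F.piecewise (d • ψ) ψ) : c = d ∧ φ = ψ := by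
  have hF : ∀ x ∈ F, c * φ x = d * ψ x := fun x hx => by simpa [hx] using congr_fun h x
  have hcompl : ∀ x ∉ F, φ x = ψ x := fun x hx => by simpa [hx] using congr_fun h x
  obtain rfl : c = d := by
    have hce := hF e he
    rw [hφ, hψ, ← hcompl f hf] at hce
    exact mul_right_cancel₀ hφf hce
  refine ⟨rfl, funext fun x => ?_⟩
  by_cases hx : x ∈ F
  exacts [mul_left_cancel₀ hc (hF x hx), hcompl x hx]

section Flows

variable [Fintype V] {K : Type*} [Field K]

/-- The total value of `φ` on the edges at `v`. Flows are only considered in characteristic two,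
where edges need no orientation and this is the net flow out of `v`. -/
def netFlow (φ : Sym2 V → K) (v : V) : K := ∑ e with v ∈ e, φ e

/-- `φ` is a nowhere-zero flow on the edge set `A`, extended by zero, that is conserved at the
vertices of `U`. The vertices outside `U` act as one contracted root vertex. -/
structure IsNowhereZeroFlow (A : Finset (Sym2 V)) (U : Finset V) (φ : Sym2 V → K) : Prop where
  ne_zero_iff : ∀ e, φ e ≠ 0 ↔ e ∈ A
  netFlow_eq_zero : ∀ u ∈ U, netFlow φ u = 0

lemma netFlow_congr {φ ψ : Sym2 V → K} {v : V} (h : ∀ e, v ∈ e → φ e = ψ e) :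
    netFlow φ v = netFlow ψ v :=
  sum_congr rfl fun e he => h e (mem_filter.1 he).2

lemma netFlow_smul (c : K) (φ : Sym2 V → K) (v : V) : netFlow (c • φ) v = c * netFlow φ v :=
  (mul_sum _ _ _).symm

lemma netFlow_update_of_mem {e : Sym2 V} {v : V} (φ : Sym2 V → K) (c : K) (h : v ∈ e) :
    netFlow (update φ e c) v = netFlow φ v - φ e + c := by
  have he : e ∈ ({e | v ∈ e} : Finset (Sym2 V)) := by simpa using h
  rw [netFlow, netFlow, sum_update_of_mem he, sum_eq_add_sum_sdiff_singleton_of_mem he φ]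
  ring

lemma netFlow_update_of_notMem {e : Sym2 V} {v : V} (φ : Sym2 V → K) (c : K) (h : v ∉ e) :
    netFlow (update φ e c) v = netFlow φ v :=
  netFlow_congr fun f hf => update_of_ne (by rintro rfl; exact h hf) c φ

lemma sum_netFlow [CharP K 2] (φ : Sym2 V → K) (U : Finset V) :
    ∑ u ∈ U, netFlow φ u = ∑ e with Odd #{u ∈ U | u ∈ e}, φ e := by
  simp only [netFlow, sum_filter]
  rw [sum_comm]
  refine sum_congr rfl fun e _ => ?_
  rw [← sum_filter, sum_const, nsmul_eq_mul, CharTwo.natCast_eq_ite, ite_mul, zero_mul, one_mul,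
    ← ite_not]
  simp only [Nat.not_even_iff_odd]

lemma netFlow_piecewise_of_forall_notMem {F : Finset (Sym2 V)} {v : V} (φ ψ : Sym2 V → K)
    (h : edgesAt F v = ∅) : netFlow (F.piecewise φ ψ) v = netFlow ψ v :=
  netFlow_congr fun e hve => piecewise_eq_of_notMem F φ ψ fun he =>
    notMem_empty e (h ▸ mem_edgesAt.2 ⟨he, hve⟩)

lemma netFlow_piecewise_of_eqOn_compl {F : Finset (Sym2 V)} {v : V} {φ ψ : Sym2 V → K}
    (h : ∀ e ∉ F, v ∈ e → φ e = ψ e) : netFlow (F.piecewise φ ψ) v = netFlow φ v := by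
  refine netFlow_congr fun e hve => ?_
  by_cases he : e ∈ F
  · rw [piecewise_eq_of_mem _ _ _ he]
  · rw [piecewise_eq_of_notMem _ _ _ he, h e he hve]

namespace IsNowhereZeroFlow

variable {A B : Finset (Sym2 V)} {U : Finset V} {φ : Sym2 V → K} {e : Sym2 V} {v : V}

lemma ne_zero (h : IsNowhereZeroFlow A U φ) (he : e ∈ A) : φ e ≠ 0 := (h.ne_zero_iff e).2 he

lemma eq_zero (h : IsNowhereZeroFlow A U φ) (he : e ∉ A) : φ e = 0 :=
  not_not.1 (mt (h.ne_zero_iff e).1 he)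

lemma netFlow_eq_sum_edgesAt (h : IsNowhereZeroFlow A U φ) (v : V) :
    netFlow φ v = ∑ e ∈ edgesAt A v, φ e := by
  refine (sum_subset (fun e he => by simpa using (mem_edgesAt.1 he).2) fun e he hA => ?_).symm
  exact h.eq_zero fun heA => hA (mem_edgesAt.2 ⟨heA, (mem_filter.1 he).2⟩)

lemma insert_iff :
    IsNowhereZeroFlow A (insert v U) φ ↔ IsNowhereZeroFlow A U φ ∧ netFlow φ v = 0 := by
  refine ⟨fun h => ⟨⟨h.1, fun u hu => h.2 u (mem_insert_of_mem hu)⟩, h.2 v (mem_insert_self v U)⟩,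
    fun ⟨h, hv⟩ => ⟨h.1, fun u hu => ?_⟩⟩
  obtain rfl | hu := mem_insert.1 hu
  exacts [hv, h.2 u hu]

lemma update_insert (h : IsNowhereZeroFlow B U φ) (heU : ∀ u ∈ U, u ∉ e) {c : K} (hc : c ≠ 0) :
    IsNowhereZeroFlow (insert e B) U (update φ e c) where
  ne_zero_iff f := by
    obtain rfl | hf := eq_or_ne f e
    · simp [hc]
    · simp [hf, h.ne_zero_iff]
  netFlow_eq_zero u hu := by rw [netFlow_update_of_notMem _ _ (heU u hu), h.2 u hu]

lemma update_zero (h : IsNowhereZeroFlow (insert e B) U φ) (he : e ∉ B) (heU : ∀ u ∈ U, u ∉ e) :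
    IsNowhereZeroFlow B U (update φ e 0) where
  ne_zero_iff f := by
    obtain rfl | hf := eq_or_ne f e
    · simp [he]
    · simp [hf, h.ne_zero_iff]
  netFlow_eq_zero u hu := by rw [netFlow_update_of_notMem _ _ (heU u hu), h.2 u hu]

lemma eqOn_compl_of_edgesAt_eq_empty {F F' : Finset (Sym2 V)}
    (h : IsNowhereZeroFlow (F ∪ F') U φ) (hv : edgesAt F' v = ∅) :
    ∀ e ∉ F, v ∈ e → φ e = 0 := fun e he hve => h.eq_zero fun hmem =>
  (mem_union.1 hmem).elim he fun he' => notMem_empty e (hv ▸ mem_edgesAt.2 ⟨he', hve⟩)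

lemma restrict {F F' : Finset (Sym2 V)} {S : Finset V} (h : IsNowhereZeroFlow (F ∪ F') U φ)
    (hSU : S ⊆ U) (hS : ∀ u ∈ S, edgesAt F' u = ∅) : IsNowhereZeroFlow F S (F.piecewise φ 0) where
  ne_zero_iff e := by
    by_cases he : e ∈ F <;> simp [he, h.ne_zero_iff]
  netFlow_eq_zero u hu := by
    exact (netFlow_piecewise_of_eqOn_compl
      (h.eqOn_compl_of_edgesAt_eq_empty (hS u hu))).trans (h.netFlow_eq_zero u (hSU hu))

lemma union {F F' : Finset (Sym2 V)} {S T : Finset V} {ψ : Sym2 V → K}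
    (hφ : IsNowhereZeroFlow F S φ) (hψ : IsNowhereZeroFlow F' T ψ)
    (hS : ∀ u ∈ S, edgesAt F' u = ∅) (hT : ∀ u ∈ T, edgesAt F u = ∅) :
    IsNowhereZeroFlow (F ∪ F') (S ∪ T) (F.piecewise φ ψ) where
  ne_zero_iff e := by
    by_cases he : e ∈ F <;> simp [he, hφ.ne_zero_iff, hψ.ne_zero_iff]
  netFlow_eq_zero u hu := by
    obtain hu | hu := mem_union.1 hu
    · refine (netFlow_piecewise_of_eqOn_compl fun e he hue => ?_).trans (hφ.netFlow_eq_zero u hu)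
      rw [hφ.eq_zero he, hψ.eq_zero fun he' => notMem_empty e (hS u hu ▸ mem_edgesAt.2 ⟨he', hue⟩)]
    · rw [netFlow_piecewise_of_forall_notMem _ _ (hT u hu), hψ.netFlow_eq_zero u hu]

lemma piecewise_smul {F F' : Finset (Sym2 V)} (h : IsNowhereZeroFlow (F ∪ F') U φ)
    (hU : ∀ u ∈ U, edgesAt F u = ∅ ∨ edgesAt F' u = ∅) {c : K} (hc : c ≠ 0) :
    IsNowhereZeroFlow (F ∪ F') U (F.piecewise (c • φ) φ) where
  ne_zero_iff e := by
    by_cases he : e ∈ F <;> simp [he, h.ne_zero_iff, hc]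
  netFlow_eq_zero u hu := by
    obtain hF | hF' := hU u hu
    · rw [netFlow_piecewise_of_forall_notMem _ _ hF, h.netFlow_eq_zero u hu]
    · rw [netFlow_piecewise_of_eqOn_compl, netFlow_smul, h.netFlow_eq_zero u hu, mul_zero]
      intro e he hue
      simp [h.eqOn_compl_of_edgesAt_eq_empty hF' e he hue]

lemma netFlow_eq_add {F F' : Finset (Sym2 V)} {f : Sym2 V} (h : IsNowhereZeroFlow (F ∪ F') U φ)
    (hdisj : Disjoint F F') (he : edgesAt F v = {e}) (hf : edgesAt F' v = {f}) :
    netFlow φ v = φ e + φ f := by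
  rw [h.netFlow_eq_sum_edgesAt, edgesAt, filter_union,
    sum_union (disjoint_filter_filter hdisj), ← edgesAt, ← edgesAt, he, hf, sum_singleton,
    sum_singleton]

end IsNowhereZeroFlow

section Count

variable [Fintype K] {A B F F' : Finset (Sym2 V)} {S T U : Finset V} {e f : Sym2 V} {v w : V}

variable (K) in
open scoped Classical in
/-- The nowhere-zero flows on `A` with values in `K` that are conserved on `U`. -/
noncomputable def nowhereZeroFlows (A : Finset (Sym2 V)) (U : Finset V) : Finset (Sym2 V → K) :=
  {φ | IsNowhereZeroFlow A U φ}

variable (K) in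
/-- The number of nowhere-zero flows on `A` with values in `K` that are conserved on `U`. -/
noncomputable def flowCount (A : Finset (Sym2 V)) (U : Finset V) : ℕ := #(nowhereZeroFlows K A U)

@[simp]
lemma mem_nowhereZeroFlows {φ : Sym2 V → K} :
    φ ∈ nowhereZeroFlows K A U ↔ IsNowhereZeroFlow A U φ := by simp [nowhereZeroFlows]

lemma flowCount_eq_zero (h : ∀ φ : Sym2 V → K, ¬IsNowhereZeroFlow A U φ) : flowCount K A U = 0 :=
  card_eq_zero.2 (eq_empty_of_forall_notMem fun φ hφ => h φ (mem_nowhereZeroFlows.1 hφ))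

lemma flowCount_eq_zero_of_edgesAt_eq_singleton (hv : v ∈ U) (h : edgesAt A v = {e}) :
    flowCount K A U = 0 := by
  refine flowCount_eq_zero fun φ hφ => hφ.ne_zero (e := e) ?_ ?_
  · exact (mem_edgesAt.1 (h ▸ mem_singleton_self e)).1
  · rw [← hφ.netFlow_eq_zero v hv, hφ.netFlow_eq_sum_edgesAt, h, sum_singleton]

lemma flowCount_singleton_empty (e : Sym2 V) : flowCount K {e} ∅ = Nat.card Kˣ := by
  classical
  rw [Nat.card_eq_fintype_card]
  refine (card_bij (fun (c : Kˣ) _ => (Pi.single e (c : K) : Sym2 V → K)) (fun c _ => ?_)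
    (fun c _ d _ h => ?_) fun φ hφ => ?_).symm
  · refine mem_nowhereZeroFlows.2 ⟨fun f => ?_, by simp⟩
    obtain rfl | hf := eq_or_ne f e <;> simp [*]
  · exact Units.ext (Pi.single_injective e h)
  · have hφ := mem_nowhereZeroFlows.1 hφ
    refine ⟨Units.mk0 (φ e) (hφ.ne_zero (mem_singleton_self e)), mem_univ _, funext fun f => ?_⟩
    obtain rfl | hf := eq_or_ne f e
    · simp
    · simp [hf, hφ.eq_zero (mt mem_singleton.1 hf)]

lemma flowCount_insert_add_flowCount [CharP K 2] (he : e ∉ B) (hve : v ∈ e)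
    (heU : ∀ u ∈ U, u ∉ e) :
    flowCount K (insert e B) (insert v U) + flowCount K B (insert v U) = flowCount K B U := by
  classical
  have hconserved : nowhereZeroFlows K B (insert v U) =
      {φ ∈ nowhereZeroFlows K B U | netFlow φ v = 0} := by
    ext φ
    simp [IsNowhereZeroFlow.insert_iff]
  have hunconserved : flowCount K (insert e B) (insert v U) =
      #{φ ∈ nowhereZeroFlows K B U | ¬netFlow φ v = 0} := by
    refine card_nbij' (update · e 0) (fun φ => update φ e (netFlow φ v)) ?_ ?_ ?_ ?_ <;>
      intro φ hφ <;> simp only [coe_filter, mem_coe, Set.mem_ofPred_eq, mem_nowhereZeroFlows,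
        IsNowhereZeroFlow.insert_iff] at hφ ⊢
    · refine ⟨hφ.1.update_zero he heU, ?_⟩
      rw [netFlow_update_of_mem _ _ hve, hφ.2, zero_sub, add_zero, neg_eq_zero]
      exact hφ.1.ne_zero (mem_insert_self e B)
    · refine ⟨hφ.1.update_insert heU hφ.2, ?_⟩
      rw [netFlow_update_of_mem _ _ hve, hφ.1.eq_zero he, sub_zero, CharTwo.add_self_eq_zero]
    · rw [netFlow_update_of_mem _ _ hve, hφ.2, update_idem, zero_sub, add_zero, CharTwo.neg_eq,
        update_eq_self]
    · rw [update_idem, ← hφ.1.eq_zero he, update_eq_self]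
  rw [hunconserved, flowCount, flowCount, hconserved, add_comm, card_filter_add_card_filter_not]

lemma flowCount_eq_zero_of_bridge [CharP K 2] (hA : ∀ f ∈ A, ¬f.IsDiag) (he : e ∈ A)
    (hve : v ∈ e) (hv : v ∈ U) (hwe : w ∈ e) (hw : w ∉ U)
    (h : ∀ f ∈ A, f ≠ e → ∀ u ∈ f, u ∈ U) : flowCount K A U = 0 := by
  refine flowCount_eq_zero fun φ hφ => hφ.ne_zero he ?_
  have hodd : Odd #{u ∈ U | u ∈ e} := by
    have hvw : v ≠ w := ne_of_mem_of_not_mem hv hw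
    have : ({u ∈ U | u ∈ e} : Finset V) = {v} := by
      ext u
      rw [(Sym2.mem_and_mem_iff hvw).1 ⟨hve, hwe⟩]
      grind
    simp [this]
  have hsum : ∑ f with Odd #{u ∈ U | u ∈ f}, φ f = φ e := by
    refine sum_eq_single_of_mem e (by simpa using hodd) fun f hf hfe => hφ.eq_zero fun hfA => ?_
    have := (mem_filter.1 hf).2
    rw [card_filter_mem_of_forall_mem (hA f hfA) (h f hfA hfe)] at this
    exact absurd this (by decide)
  rw [← hsum, ← sum_netFlow, sum_eq_zero hφ.netFlow_eq_zero]

-- The net flows at all vertices sum to zero, so one conservation law is redundant.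
lemma flowCount_univ_erase [CharP K 2] (hA : ∀ f ∈ A, ¬f.IsDiag) (w : V) :
    flowCount K A (univ.erase w) = flowCount K A univ := by
  refine congr_arg card (ext fun φ => ?_)
  rw [mem_nowhereZeroFlows, mem_nowhereZeroFlows, ← insert_erase (mem_univ w),
    IsNowhereZeroFlow.insert_iff, erase_insert (notMem_erase w univ)]
  refine ⟨fun hφ => ⟨hφ, ?_⟩, And.left⟩
  rw [← sum_eq_single_of_mem (f := netFlow φ) w (mem_univ w)
    fun u _ hu => hφ.netFlow_eq_zero u (mem_erase.2 ⟨hu, mem_univ u⟩), sum_netFlow]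
  refine sum_eq_zero fun f hf => hφ.eq_zero fun hfA => ?_
  have := (mem_filter.1 hf).2
  rw [card_filter_mem_of_forall_mem (hA f hfA) fun u _ => mem_univ u] at this
  exact absurd this (by decide)

lemma flowCount_union (hdisj : Disjoint F F') (hS : ∀ u ∈ S, edgesAt F' u = ∅)
    (hT : ∀ u ∈ T, edgesAt F u = ∅) :
    flowCount K (F ∪ F') (S ∪ T) = flowCount K F S * flowCount K F' T := by
  rw [flowCount, flowCount, flowCount, ← card_product]
  refine card_nbij' (fun φ => (F.piecewise φ 0, F'.piecewise φ 0))
    (fun p => F.piecewise p.1 p.2) ?_ ?_ ?_ ?_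
  · intro φ hφ
    rw [mem_coe, mem_nowhereZeroFlows] at hφ
    rw [mem_coe, mem_product, mem_nowhereZeroFlows, mem_nowhereZeroFlows]
    exact ⟨hφ.restrict subset_union_left hS,
      (union_comm F F' ▸ hφ).restrict subset_union_right hT⟩
  · rintro ⟨φ, ψ⟩ hp
    simp only [mem_coe, mem_product, mem_nowhereZeroFlows] at hp
    exact mem_nowhereZeroFlows.2 (hp.1.union hp.2 hS hT)
  · intro φ hφ
    rw [mem_coe, mem_nowhereZeroFlows] at hφ
    ext e
    by_cases he : e ∈ F <;> by_cases he' : e ∈ F' <;> simp [he, he', hφ.eq_zero]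
  · rintro ⟨φ, ψ⟩ hp
    simp only [mem_coe, mem_product, mem_nowhereZeroFlows] at hp
    have hnot : ∀ e ∈ F', e ∉ F := fun e he' he => disjoint_left.1 hdisj he he'
    ext e
    · by_cases he : e ∈ F <;> simp [he, hp.1.eq_zero]
    · by_cases he' : e ∈ F' <;> simp [he', hnot, hp.2.eq_zero]

lemma card_units_mul_flowCount_insert [CharP K 2] (hdisj : Disjoint F F')
    (he : edgesAt F v = {e}) (hf : edgesAt F' v = {f})
    (hU : ∀ u ∈ U, edgesAt F u = ∅ ∨ edgesAt F' u = ∅) :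
    Nat.card Kˣ * flowCount K (F ∪ F') (insert v U) = flowCount K (F ∪ F') U := by
  have heF : e ∈ F := (mem_edgesAt.1 (he ▸ mem_singleton_self e)).1
  have hfF' : f ∈ F' := (mem_edgesAt.1 (hf ▸ mem_singleton_self f)).1
  have hfF : f ∉ F := disjoint_right.1 hdisj hfF'
  have hbalance {φ : Sym2 V → K} (hφ : IsNowhereZeroFlow (F ∪ F') U φ) :
      netFlow φ v = 0 ↔ φ e = φ f := by
    rw [hφ.netFlow_eq_add hdisj he hf, CharTwo.add_eq_zero]
  classical
  rw [Nat.card_eq_fintype_card, ← card_univ, flowCount, ← card_product]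
  refine card_bij (fun p _ => F.piecewise ((p.1 : K) • p.2) p.2) ?_ ?_ ?_
  · rintro ⟨c, φ⟩ hp
    rw [mem_product, mem_nowhereZeroFlows, IsNowhereZeroFlow.insert_iff] at hp
    exact mem_nowhereZeroFlows.2 (hp.2.1.piecewise_smul hU c.ne_zero)
  · rintro ⟨c, φ⟩ hp ⟨d, ψ⟩ hq h
    rw [mem_product, mem_nowhereZeroFlows, IsNowhereZeroFlow.insert_iff] at hp hq
    obtain ⟨hcd, hφψ⟩ := eq_and_eq_of_piecewise_smul_eq c.ne_zero heF hfF
      ((hbalance hp.2.1).1 hp.2.2) ((hbalance hq.2.1).1 hq.2.2)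
      (hp.2.1.ne_zero (mem_union_right F hfF')) h
    exact Prod.ext (Units.ext hcd) hφψ
  · intro φ hφ
    rw [mem_nowhereZeroFlows] at hφ
    have he0 : φ e ≠ 0 := hφ.ne_zero (mem_union_left F' heF)
    have hf0 : φ f ≠ 0 := hφ.ne_zero (mem_union_right F hfF')
    have hc : φ f / φ e ≠ 0 := div_ne_zero hf0 he0
    have hscaled := hφ.piecewise_smul hU hc
    refine ⟨((Units.mk0 _ hc)⁻¹, F.piecewise ((φ f / φ e) • φ) φ), ?_, funext fun x => ?_⟩
    · rw [mem_product, mem_nowhereZeroFlows, IsNowhereZeroFlow.insert_iff, hbalance hscaled]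
      exact ⟨mem_univ _, hscaled, by simp [heF, hfF, he0]⟩
    · by_cases hx : x ∈ F
      · simp [hx, -inv_div, inv_mul_cancel_left₀ hc]
      · simp [hx]

end Count

end Flows

section Cuts

variable {A B F F' : Finset (Sym2 V)} {S S' T T' U : Finset V} {v : V}

/-- The number of pairs in `S × T` joined by an edge of `A`. For disjoint `S` and `T` this is the
number of edges of `A` between them. -/
def cutSize (A : Finset (Sym2 V)) (S T : Finset V) : ℕ := #{p ∈ S ×ˢ T | s(p.1, p.2) ∈ A}

lemma cutSize_comm (A : Finset (Sym2 V)) (S T : Finset V) : cutSize A S T = cutSize A T S :=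
  card_nbij' Prod.swap Prod.swap (fun p hp => by simp_all [Sym2.eq_swap])
    (fun p hp => by simp_all [Sym2.eq_swap]) (fun _ _ => rfl) fun _ _ => rfl

lemma cutSize_mono (A : Finset (Sym2 V)) (hS : S ⊆ S') (hT : T ⊆ T') :
    cutSize A S T ≤ cutSize A S' T' :=
  card_le_card (filter_subset_filter _ (product_subset_product hS hT))

lemma cutSize_union_left (A : Finset (Sym2 V)) (h : Disjoint S S') (T : Finset V) :
    cutSize A (S ∪ S') T = cutSize A S T + cutSize A S' T := by
  rw [cutSize, union_product, filter_union,
    card_union_of_disjoint (disjoint_filter_filter (disjoint_product.2 (Or.inl h)))]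
  rfl

lemma cutSize_union_right (A : Finset (Sym2 V)) (S : Finset V) (h : Disjoint T T') :
    cutSize A S (T ∪ T') = cutSize A S T + cutSize A S T' := by
  rw [cutSize_comm, cutSize_union_left A h, cutSize_comm A T, cutSize_comm A T']

lemma cutSize_insert_left (A : Finset (Sym2 V)) (h : v ∉ S) (T : Finset V) :
    cutSize A (insert v S) T = cutSize A {v} T + cutSize A S T := by
  rw [insert_eq, cutSize_union_left A (disjoint_singleton_left.2 h)]

lemma cutSize_insert_right (A : Finset (Sym2 V)) (S : Finset V) (h : v ∉ T) :
    cutSize A S (insert v T) = cutSize A S {v} + cutSize A S T := by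
  rw [insert_eq, cutSize_union_right A S (disjoint_singleton_left.2 h)]

lemma cutSize_congr (h : ∀ u ∈ S, edgesAt F u = edgesAt A u) (T : Finset V) :
    cutSize F S T = cutSize A S T := by
  refine congr_arg card (filter_congr fun p hp => ?_)
  have := congr_arg (s(p.1, p.2) ∈ ·) (h p.1 (mem_product.1 hp).1)
  simpa using this

lemma cutSize_le_card (hdisj : Disjoint S T) (h : ∀ x ∈ S, ∀ y ∈ T, s(x, y) ∈ A → s(x, y) ∈ F) :
    cutSize A S T ≤ #F := by
  refine card_le_card_of_injOn (fun p => s(p.1, p.2)) (fun p hp => ?_) fun p hp q hq hpq => ?_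
  · simp only [coe_filter, mem_product, Set.mem_ofPred_eq] at hp
    exact h _ hp.1.1 _ hp.1.2 hp.2
  · simp only [coe_filter, mem_product, Set.mem_ofPred_eq] at hp hq
    obtain h | h := Sym2.eq_iff.1 hpq
    · exact Prod.ext h.1 h.2
    · exact absurd (h.1 ▸ hp.1.1) (disjoint_right.1 hdisj hq.1.2)

lemma cutSize_singleton_le (hv : v ∉ T) : cutSize A {v} T ≤ #(edgesAt A v) :=
  cutSize_le_card (disjoint_singleton_left.2 hv) fun x hx y _ h =>
    mem_edgesAt.2 ⟨h, mem_singleton.1 hx ▸ Sym2.mem_mk_left x y⟩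

lemma cutSize_singleton_eq (hv : v ∉ T) (h : ∀ e ∈ edgesAt A v, ∃ y ∈ T, y ∈ e) :
    cutSize A {v} T = #(edgesAt A v) := by
  refine (cutSize_singleton_le hv).antisymm
    (card_le_card_of_surjOn (fun p => s(p.1, p.2)) fun e he => ?_)
  obtain ⟨y, hyT, hye⟩ := h e he
  have hvy : v ≠ y := fun h => hv (h ▸ hyT)
  obtain rfl := (Sym2.mem_and_mem_iff hvy).1 ⟨(mem_edgesAt.1 he).2, hye⟩
  exact ⟨(v, y), by simpa [hyT] using (mem_edgesAt.1 he).1, rfl⟩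

lemma cutSize_eq_zero (hS : ∀ u ∈ S, edgesAt F' u = ∅) (hT : ∀ u ∈ T, edgesAt F u = ∅) :
    cutSize (F ∪ F') S T = 0 := by
  refine card_eq_zero.2 (filter_eq_empty_iff.2 fun p hp hmem => ?_)
  obtain ⟨h₁, h₂⟩ := mem_product.1 hp
  obtain h | h := mem_union.1 hmem
  · exact notMem_empty _ (hT p.2 h₂ ▸ mem_edgesAt.2 ⟨h, Sym2.mem_mk_right _ _⟩)
  · exact notMem_empty _ (hS p.1 h₁ ▸ mem_edgesAt.2 ⟨h, Sym2.mem_mk_left _ _⟩)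

end Cuts

section ThreeConnected

variable {A B F F' : Finset (Sym2 V)} {S T U : Finset V} {v : V}

/-- Some vertex of `S` has degree three in `A`. -/
def HasCubicVertex (A : Finset (Sym2 V)) (S : Finset V) : Prop := ∃ v ∈ S, #(edgesAt A v) = 3

lemma HasCubicVertex.mono (h : HasCubicVertex A S) (hST : S ⊆ T) : HasCubicVertex A T :=
  h.imp fun _ hu => ⟨hST hu.1, hu.2⟩

lemma hasCubicVertex_union :
    HasCubicVertex A (S ∪ T) ↔ HasCubicVertex A S ∨ HasCubicVertex A T := by
  simp only [HasCubicVertex, mem_union, or_and_right, exists_or]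

lemma hasCubicVertex_congr (h : ∀ u ∈ S, edgesAt B u = edgesAt A u) :
    HasCubicVertex B S ↔ HasCubicVertex A S :=
  exists_congr fun u => and_congr_right fun hu => by rw [h u hu]

variable [Fintype V]

/-- The vertices of `U` have degree two or three, and the graph with edge set `A` in which the
vertices outside `U` are contracted to one root is cubic and 3-edge-connected up to subdivision of
edges, apart from the root. Only cuts with a cubic vertex on either side are constrained, since the
other ones may just cut a subdivided edge twice. -/
structure IsRootedThreeConnected (A : Finset (Sym2 V)) (U : Finset V) : Prop where
  card_edgesAt : ∀ u ∈ U, #(edgesAt A u) = 2 ∨ #(edgesAt A u) = 3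
  hasCubicVertex : HasCubicVertex A U
  two_le_cutSize_compl : 2 ≤ cutSize A U Uᶜ
  le_cutSize : ∀ ⦃S T⦄, Disjoint S T → S ∪ T = U → HasCubicVertex A S → HasCubicVertex A T →
    2 ≤ cutSize A S T ∧ 3 ≤ cutSize A S T + cutSize A S Uᶜ

lemma cutSize_compl_eq_add (A : Finset (Sym2 V)) (S : Finset V) (hv : v ∉ U) :
    cutSize A S Uᶜ = cutSize A S {v} + cutSize A S (insert v U)ᶜ := by
  have hcompl : Uᶜ = insert v (insert v U)ᶜ := by rw [compl_insert, insert_erase (mem_compl.2 hv)]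
  rw [hcompl, cutSize_insert_right A S (by simp)]

lemma cutSize_add_cutSize_compl_insert_le (A : Finset (Sym2 V)) (hv : v ∉ U) :
    cutSize A {v} U + cutSize A {v} (insert v U)ᶜ ≤ #(edgesAt A v) := by
  have hdisj : Disjoint U (insert v U)ᶜ :=
    disjoint_right.2 fun u hu hmem => mem_compl.1 hu (mem_insert_of_mem hmem)
  rw [← cutSize_union_right A {v} hdisj]
  exact cutSize_singleton_le (by simp [hv])

namespace IsRootedThreeConnected

lemma le_cutSize_insert (h : IsRootedThreeConnected A (insert v U)) (hv : v ∉ U)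
    (hdisj : Disjoint S T) (hST : S ∪ T = U) (hS : HasCubicVertex A S)
    (hT : HasCubicVertex A (insert v T)) :
    2 ≤ cutSize A S {v} + cutSize A S T ∧
      3 ≤ cutSize A S {v} + cutSize A S T + cutSize A S (insert v U)ᶜ := by
  have hvS : v ∉ S := fun hvS => hv (hST ▸ mem_union_left T hvS)
  have hvT : v ∉ T := fun hvT => hv (hST ▸ mem_union_right S hvT)
  rw [← cutSize_insert_right A S hvT]
  exact h.le_cutSize (disjoint_insert_right.2 ⟨hvS, hdisj⟩) (by rw [union_insert, hST]) hS hT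

lemma contract (h : IsRootedThreeConnected A (insert v U)) (hv : v ∉ U)
    (hB : ∀ u ∈ U, edgesAt B u = edgesAt A u) (hcubic : HasCubicVertex A U)
    (hroot : 2 ≤ cutSize A U Uᶜ)
    (hinner : ∀ ⦃S T⦄, Disjoint S T → S ∪ T = U → HasCubicVertex A S → HasCubicVertex A T →
      2 ≤ cutSize A S T) : IsRootedThreeConnected B U where
  card_edgesAt u hu := hB u hu ▸ h.card_edgesAt u (mem_insert_of_mem hu)
  hasCubicVertex := (hasCubicVertex_congr hB).2 hcubic
  two_le_cutSize_compl := cutSize_congr hB _ ▸ hroot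
  le_cutSize S T hdisj hST hS hT := by
    have hBS : ∀ u ∈ S, edgesAt B u = edgesAt A u := fun u hu => hB u (hST ▸ mem_union_left T hu)
    have hBT : ∀ u ∈ T, edgesAt B u = edgesAt A u := fun u hu => hB u (hST ▸ mem_union_right S hu)
    rw [hasCubicVertex_congr hBS] at hS
    rw [hasCubicVertex_congr hBT] at hT
    have hA := (h.le_cutSize_insert hv hdisj hST hS (hT.mono (subset_insert v T))).2
    rw [cutSize_congr hBS, cutSize_congr hBS, cutSize_compl_eq_add A S hv]
    exact ⟨hinner hdisj hST hS hT, by omega⟩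

lemma contract_of_card_edgesAt_eq_two (h : IsRootedThreeConnected A (insert v U)) (hv : v ∉ U)
    (hB : ∀ u ∈ U, edgesAt B u = edgesAt A u) (hdeg : #(edgesAt A v) = 2)
    (hcut : cutSize A {v} U = 1) : IsRootedThreeConnected B U := by
  refine h.contract hv hB ?_ ?_ fun S T hdisj hST hS hT => ?_
  · obtain ⟨u, hu, hu3⟩ := h.hasCubicVertex
    obtain rfl | hu := mem_insert.1 hu
    · omega
    · exact ⟨u, hu, hu3⟩
  · have hroot := h.two_le_cutSize_compl
    have hle := cutSize_add_cutSize_compl_insert_le A hv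
    rw [cutSize_insert_left A hv] at hroot
    rw [cutSize_compl_eq_add A U hv, cutSize_comm A U {v}]
    omega
  · have hS2 := (h.le_cutSize_insert hv hdisj hST hS (hT.mono (subset_insert v T))).1
    have hT2 := (h.le_cutSize_insert hv hdisj.symm (union_comm S T ▸ hST) hT
      (hS.mono (subset_insert v S))).1
    rw [cutSize_comm A T S] at hT2
    rw [← hST, cutSize_union_right A {v} hdisj, cutSize_comm A {v}, cutSize_comm A {v}] at hcut
    omega

lemma card_edgesAt_eq_two_of_branch (h : IsRootedThreeConnected A (insert v U)) (hv : v ∉ U)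
    (hdeg : #(edgesAt A v) = 3) (hdisj : Disjoint S T) (hST : S ∪ T = U)
    (hcutST : cutSize A S T = 0) (hcutSv : cutSize A S {v} ≤ 1) :
    ∀ u ∈ S, #(edgesAt A u) = 2 := by
  intro u hu
  refine (h.card_edgesAt u (mem_insert_of_mem (hST ▸ mem_union_left T hu))).resolve_right
    fun hu3 => ?_
  have := (h.le_cutSize_insert hv hdisj hST ⟨u, hu, hu3⟩ ⟨v, mem_insert_self v T, hdeg⟩).1
  omega

/-- The cuts around `P` and `W'` are too large for the cuts `(P ∪ Q ∪ {v}, W ∪ W')` and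
`(P ∪ W, Q ∪ W')`, whose edges cover theirs. -/
lemma false_of_crossing {P Q W W' : Finset V} (h : IsRootedThreeConnected A (insert v U))
    (hv : v ∉ U) (hU : (P ∪ Q) ∪ (W ∪ W') = U) (hPQ : Disjoint P Q) (hWW' : Disjoint W W')
    (hdisj : Disjoint (P ∪ Q) (W ∪ W')) (hP : HasCubicVertex A P) (hW' : HasCubicVertex A W')
    (hroot : cutSize A P (insert v U)ᶜ = 0) (hPv : cutSize A P {v} ≤ 1)
    (hcut₁ : cutSize A (insert v (P ∪ Q)) (W ∪ W') ≤ 2)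
    (hcut₂ : cutSize A (P ∪ W) (Q ∪ W') ≤ 1) : False := by
  have hvPQ : v ∉ P ∪ Q := fun hvPQ => hv (hU ▸ mem_union_left _ hvPQ)
  obtain ⟨⟨hPW, hQW⟩, hPW', hQW'⟩ := by
    simpa only [disjoint_union_left, disjoint_union_right] using hdisj
  have hcutP := (h.le_cutSize_insert hv (S := P) (T := Q ∪ (W ∪ W'))
    (disjoint_union_right.2 ⟨hPQ, disjoint_union_right.2 ⟨hPW, hPW'⟩⟩) (by rw [← hU, union_assoc])
    hP (hW'.mono (by grind))).2
  have hcutW' := (h.le_cutSize_insert hv (S := W') (T := (P ∪ Q) ∪ W)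
    (disjoint_union_right.2 ⟨disjoint_union_right.2 ⟨hPW'.symm, hQW'.symm⟩, hWW'.symm⟩)
    (by rw [← hU]; grind) hW' (hP.mono (by grind))).1
  rw [cutSize_union_right A P (disjoint_union_right.2 ⟨hQW, hQW'⟩),
    cutSize_union_right A P hWW'] at hcutP
  rw [cutSize_union_right A W' (disjoint_union_left.2 ⟨hPW, hQW⟩),
    cutSize_union_right A W' hPQ, cutSize_comm A W' P, cutSize_comm A W' Q, cutSize_comm A W' {v},
    cutSize_comm A W' W] at hcutW'
  rw [cutSize_insert_left A hvPQ, cutSize_union_left A hPQ, cutSize_union_right A _ hWW',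
    cutSize_union_right A _ hWW', cutSize_union_right A _ hWW'] at hcut₁
  rw [cutSize_union_left A hPW, cutSize_union_right A _ hQW', cutSize_union_right A _ hQW']
    at hcut₂
  omega

lemma false_of_hasCubicVertex_inter {S₀ T₀ : Finset V} (h : IsRootedThreeConnected A (insert v U))
    (hv : v ∉ U) (hdisj₀ : Disjoint S₀ T₀) (hU₀ : S₀ ∪ T₀ = U) (hcut₀ : cutSize A S₀ T₀ ≤ 1)
    (hS₀v : cutSize A S₀ {v} ≤ 1) (hdisj : Disjoint S T) (hU : S ∪ T = U)
    (hcut : cutSize A (insert v S) T ≤ 2) (hroot : cutSize A S (insert v U)ᶜ = 0)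
    (hSS₀ : HasCubicVertex A (S ∩ S₀)) (hTT₀ : HasCubicVertex A (T ∩ T₀)) : False := by
  have hS : S ∩ S₀ ∪ S ∩ T₀ = S := by
    rw [← inter_union_distrib_left, hU₀, ← hU, inter_eq_left]
    exact subset_union_left
  have hT : T ∩ S₀ ∪ T ∩ T₀ = T := by
    rw [← inter_union_distrib_left, hU₀, ← hU, inter_eq_left]
    exact subset_union_right
  have hS₀ : S ∩ S₀ ∪ T ∩ S₀ = S₀ := by
    rw [← union_inter_distrib_right, hU, ← hU₀, inter_eq_right]
    exact subset_union_left
  have hT₀ : S ∩ T₀ ∪ T ∩ T₀ = T₀ := by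
    rw [← union_inter_distrib_right, hU, ← hU₀, inter_eq_right]
    exact subset_union_right
  exact h.false_of_crossing hv (by rw [hS, hT, hU])
    (hdisj₀.mono inter_subset_right inter_subset_right)
    (hdisj₀.mono inter_subset_right inter_subset_right) (by rwa [hS, hT]) hSS₀ hTT₀
    (Nat.le_zero.1 (hroot ▸ cutSize_mono A inter_subset_left subset_rfl))
    ((cutSize_mono A inter_subset_right subset_rfl).trans hS₀v) (by rwa [hS, hT])
    (by rwa [hS₀, hT₀])

lemma three_le_cutSize_insert {S₀ T₀ : Finset V} (h : IsRootedThreeConnected A (insert v U))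
    (hv : v ∉ U) (hdisj₀ : Disjoint S₀ T₀) (hU₀ : S₀ ∪ T₀ = U) (hS₀ : HasCubicVertex A S₀)
    (hT₀ : HasCubicVertex A T₀) (hcut₀ : cutSize A S₀ T₀ ≤ 1) (hS₀v : cutSize A S₀ {v} ≤ 1)
    (hT₀v : cutSize A T₀ {v} ≤ 1) (hdisj : Disjoint S T) (hU : S ∪ T = U)
    (hS : HasCubicVertex A S) (hT : HasCubicVertex A T) :
    3 ≤ cutSize A (insert v S) T + cutSize A S (insert v U)ᶜ := by
  have htwo := (h.le_cutSize_insert hv hdisj.symm (union_comm S T ▸ hU) hT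
    (hS.mono (subset_insert v S))).1
  have hvS : v ∉ S := fun hvS => hv (hU ▸ mem_union_left T hvS)
  rw [cutSize_comm A T {v}, cutSize_comm A T S, ← cutSize_insert_left A hvS] at htwo
  by_contra! hlt
  have hmeet {R : Finset V} (hR : HasCubicVertex A R) (hRU : R ⊆ U) :
      (HasCubicVertex A (R ∩ S₀) ∨ HasCubicVertex A (R ∩ T₀)) := by
    rwa [← hasCubicVertex_union, ← inter_union_distrib_left, hU₀, inter_eq_left.2 hRU]
  have hmeet₀ {R : Finset V} (hR : HasCubicVertex A R) (hRU : R ⊆ U) :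
      (HasCubicVertex A (S ∩ R) ∨ HasCubicVertex A (T ∩ R)) := by
    rwa [← hasCubicVertex_union, ← union_inter_distrib_right, hU, inter_eq_right.2 hRU]
  have hquadrants : HasCubicVertex A (S ∩ S₀) ∧ HasCubicVertex A (T ∩ T₀) ∨
      HasCubicVertex A (S ∩ T₀) ∧ HasCubicVertex A (T ∩ S₀) := by
    have := hmeet hS (hU ▸ subset_union_left)
    have := hmeet hT (hU ▸ subset_union_right)
    have := hmeet₀ hS₀ (hU₀ ▸ subset_union_left)
    have := hmeet₀ hT₀ (hU₀ ▸ subset_union_right)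
    tauto
  obtain ⟨hP, hW⟩ | ⟨hP, hW⟩ := hquadrants
  · exact h.false_of_hasCubicVertex_inter hv hdisj₀ hU₀ hcut₀ hS₀v hdisj hU (by omega) (by omega)
      hP hW
  · exact h.false_of_hasCubicVertex_inter hv hdisj₀.symm (union_comm S₀ T₀ ▸ hU₀)
      (cutSize_comm A S₀ T₀ ▸ hcut₀) hT₀v hdisj hU (by omega) (by omega) hP hW

lemma delete (h : IsRootedThreeConnected A (insert v U)) (hv : v ∉ U)
    (hB : ∀ u ∈ U, edgesAt B u = edgesAt A u) (hBv : #(edgesAt B v) = 2)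
    (hcubic : HasCubicVertex A U) (hroot : 2 ≤ cutSize A U (insert v U)ᶜ)
    (hinner : ∀ ⦃S T⦄, Disjoint S T → S ∪ T = U → HasCubicVertex A S → HasCubicVertex A T →
      3 ≤ cutSize A (insert v S) T + cutSize A S (insert v U)ᶜ) :
    IsRootedThreeConnected B (insert v U) := by
  have hAB {S : Finset V} (hS : HasCubicVertex B S) (hSU : S ⊆ insert v U) :
      HasCubicVertex A (S.erase v) := by
    obtain ⟨u, hu, hu3⟩ := hS
    have huv : u ≠ v := by rintro rfl; omega
    exact ⟨u, mem_erase.2 ⟨huv, hu⟩, hB u (mem_of_mem_insert_of_ne (hSU hu) huv) ▸ hu3⟩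
  refine ⟨fun u hu => ?_, ((hasCubicVertex_congr hB).2 hcubic).mono (subset_insert v U), ?_,
    fun S T hdisj hST hS hT => ?_⟩
  · obtain rfl | hu' := mem_insert.1 hu
    exacts [Or.inl hBv, hB u hu' ▸ h.card_edgesAt u hu]
  · rw [cutSize_insert_left B hv, cutSize_congr hB]
    omega
  replace hS := hAB hS (hST ▸ subset_union_left)
  replace hT := hAB hT (hST ▸ subset_union_right)
  by_cases hvS : v ∈ S
  · obtain ⟨S, hvS', rfl⟩ : ∃ S', v ∉ S' ∧ insert v S' = S :=
      ⟨S.erase v, notMem_erase v S, insert_erase hvS⟩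
    have hvT : v ∉ T := disjoint_left.1 hdisj hvS
    rw [erase_insert hvS'] at hS
    rw [erase_eq_of_notMem hvT] at hT
    replace hdisj : Disjoint S T := hdisj.mono_left (subset_insert v S)
    replace hST : S ∪ T = U := by
      rw [← erase_insert hv, ← hST, insert_union, erase_insert (by simp [hvS', hvT])]
    have htwo := (h.le_cutSize_insert hv hdisj.symm (union_comm S T ▸ hST) hT
      (hS.mono (subset_insert v S))).1
    rw [← cutSize_insert_right A T hvS', cutSize_comm A T] at htwo
    have hmono := cutSize_mono B (subset_insert v S) (subset_refl (insert v U)ᶜ)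
    rw [cutSize_congr fun u hu => hB u (hST ▸ mem_union_left T hu)] at hmono
    rw [cutSize_comm B _ T, cutSize_congr fun u hu => hB u (hST ▸ mem_union_right S hu),
      cutSize_comm A T]
    have := hinner hdisj hST hS hT
    omega
  · have hSU : S ⊆ U := fun u hu =>
      mem_of_mem_insert_of_ne (hST ▸ mem_union_left T hu) (ne_of_mem_of_not_mem hu hvS)
    rw [cutSize_congr fun u hu => hB u (hSU hu), cutSize_congr fun u hu => hB u (hSU hu)]
    exact h.le_cutSize hdisj hST (hS.mono (erase_subset v S)) (hT.mono (erase_subset v T))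

/-- If contracting an edge at the cubic vertex `v` destroys 3-connectivity because of a small cut
`(S₀, T₀)` of `U`, then deleting it does not. -/
lemma delete_of_cutSize_le_one {S₀ T₀ : Finset V} (h : IsRootedThreeConnected A (insert v U))
    (hv : v ∉ U) (hB : ∀ u ∈ U, edgesAt B u = edgesAt A u) (hBv : #(edgesAt B v) = 2)
    (hcut : cutSize A {v} U = 2) (hdisj₀ : Disjoint S₀ T₀) (hU₀ : S₀ ∪ T₀ = U)
    (hS₀ : HasCubicVertex A S₀) (hT₀ : HasCubicVertex A T₀) (hcut₀ : cutSize A S₀ T₀ ≤ 1) :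
    IsRootedThreeConnected B (insert v U) := by
  obtain ⟨hS₀two, hS₀three⟩ :=
    h.le_cutSize_insert hv hdisj₀ hU₀ hS₀ (hT₀.mono (subset_insert v T₀))
  obtain ⟨hT₀two, hT₀three⟩ := h.le_cutSize_insert hv hdisj₀.symm (union_comm S₀ T₀ ▸ hU₀) hT₀
    (hS₀.mono (subset_insert v S₀))
  rw [cutSize_comm A T₀ S₀] at hT₀two hT₀three
  rw [← hU₀, cutSize_union_right A {v} hdisj₀, cutSize_comm A {v}, cutSize_comm A {v}] at hcut
  refine h.delete hv hB hBv (hS₀.mono (hU₀ ▸ subset_union_left)) ?_ fun S T =>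
    h.three_le_cutSize_insert hv hdisj₀ hU₀ hS₀ hT₀ hcut₀ (by omega) (by omega)
  rw [← hU₀, cutSize_union_left A hdisj₀, hU₀]
  omega

end IsRootedThreeConnected

end ThreeConnected

section RootedSubcubic

variable {A B F F' : Finset (Sym2 V)} {S T U : Finset V} {e f : Sym2 V} {v w : V}

lemma edgesAt_insert_of_mem (B : Finset (Sym2 V)) (hv : v ∈ e) :
    edgesAt (insert e B) v = insert e (edgesAt B v) := by
  rw [edgesAt, filter_insert, if_pos hv, edgesAt]

lemma edgesAt_insert_of_notMem (B : Finset (Sym2 V)) (hv : v ∉ e) :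
    edgesAt (insert e B) v = edgesAt B v := by
  rw [edgesAt, filter_insert, if_neg hv, edgesAt]

lemma edgesAt_union (F F' : Finset (Sym2 V)) (v : V) :
    edgesAt (F ∪ F') v = edgesAt F v ∪ edgesAt F' v := filter_union _ _ _

lemma card_edgesAt_union (h : Disjoint F F') (v : V) :
    #(edgesAt (F ∪ F') v) = #(edgesAt F v) + #(edgesAt F' v) := by
  rw [edgesAt_union]
  exact card_union_of_disjoint (disjoint_filter_filter h)

lemma cutSize_insert_edge (B : Finset (Sym2 V)) (S : Finset V) (h : ∀ u ∈ T, u ∉ e) :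
    cutSize (insert e B) S T = cutSize B S T := by
  rw [cutSize_comm, cutSize_congr fun u hu => edgesAt_insert_of_notMem B (h u hu),
    cutSize_comm]

/-- The edge set `A` cannot be split into two parts without common vertices in `U`: contracting the
vertices outside `U` to a root, the graph stays connected when the root is split into leaves. -/
def LinkedThrough (A : Finset (Sym2 V)) (U : Finset V) : Prop :=
  ∀ ⦃F F'⦄, F ∪ F' = A → Disjoint F F' → F.Nonempty → F'.Nonempty →
    ∃ u ∈ U, (edgesAt F u).Nonempty ∧ (edgesAt F' u).Nonempty

lemma LinkedThrough.mono (h : LinkedThrough A S) (hST : S ⊆ T) : LinkedThrough A T :=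
  fun _ _ hFA hdisj hF hF' => (h hFA hdisj hF hF').imp fun _ hu => ⟨hST hu.1, hu.2⟩

/-- The induction hypothesis on the graph with edge set `A` in which the vertices outside `U` are
contracted to a root: it is loopless and has maximum degree three apart from the root, which is an
end of some edge but no cut vertex. -/
structure IsRootedSubcubic (A : Finset (Sym2 V)) (U : Finset V) : Prop where
  not_isDiag : ∀ e ∈ A, ¬e.IsDiag
  nonempty_edgesAt : ∀ u ∈ U, (edgesAt A u).Nonempty
  card_edgesAt_le : ∀ u ∈ U, #(edgesAt A u) ≤ 3
  linkedThrough : LinkedThrough A U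
  exists_root_edge : ∃ e ∈ A, ∃ w ∈ e, w ∉ U

/-- The edge sets `F` and `F'` are two branches, with vertices in `S` and `T`, that are
joined only at `v`, where they have one edge each. -/
structure IsSplitAt (v : V) (F F' : Finset (Sym2 V)) (S T : Finset V) : Prop where
  disjoint_edges : Disjoint F F'
  disjoint_vertices : Disjoint S T
  card_left : #(edgesAt F v) = 1
  card_right : #(edgesAt F' v) = 1
  edgesAt_right : ∀ u ∈ S, edgesAt F' u = ∅
  edgesAt_left : ∀ u ∈ T, edgesAt F u = ∅

lemma IsSplitAt.symm (h : IsSplitAt v F F' S T) : IsSplitAt v F' F T S :=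
  ⟨h.1.symm, h.2.symm, h.4, h.3, h.6, h.5⟩

lemma IsSplitAt.edgesAt_eq (h : IsSplitAt v F F' S T) {u : V} (hu : u ∈ S) :
    edgesAt F u = edgesAt (F ∪ F') u := by
  rw [edgesAt_union, h.edgesAt_right u hu, union_empty]

namespace IsRootedSubcubic

lemma eq_singleton_and_eq_empty (h : IsRootedSubcubic A U) (he : e ∈ A) (heU : ∀ u ∈ U, u ∉ e) :
    A = {e} ∧ U = ∅ := by
  obtain rfl : A = {e} := by
    by_contra hne
    obtain ⟨u, hu, ⟨f, hf⟩, -⟩ := h.linkedThrough (F := {e}) (F' := A.erase e)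
      (by rw [← insert_eq, insert_erase he]) (by simp) (singleton_nonempty e)
      (by rwa [nonempty_iff_ne_empty, Ne, erase_eq_empty_iff, not_or,
        and_iff_right (ne_empty_of_mem he)])
    rw [mem_edgesAt, mem_singleton] at hf
    exact heU u hu (hf.1 ▸ hf.2)
  refine ⟨rfl, eq_empty_of_forall_notMem fun u hu => ?_⟩
  obtain ⟨f, hf⟩ := h.nonempty_edgesAt u hu
  rw [mem_edgesAt, mem_singleton] at hf
  exact heU u hu (hf.1 ▸ hf.2)

lemma exists_mem (h : IsRootedSubcubic A U) (hU : U.Nonempty) (he : e ∈ A) : ∃ u ∈ U, u ∈ e := by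
  by_contra! heU
  exact hU.ne_empty (h.eq_singleton_and_eq_empty he heU).2

lemma cutSize_singleton (h : IsRootedSubcubic B U) (heU : ∀ u ∈ U, u ∉ e) (hv : v ∉ U)
    (hU : U.Nonempty) : cutSize (insert e B) {v} U = #(edgesAt B v) := by
  rw [cutSize_insert_edge B {v} heU]
  exact cutSize_singleton_eq hv fun f hf => h.exists_mem hU (mem_edgesAt.1 hf).1

lemma branch (h : IsRootedSubcubic A (insert v U)) (hv : v ∉ U) (hFA : F ⊆ A)
    (hFv : #(edgesAt F v) = 1) (hS : S ⊆ U) (hFS : ∀ u ∈ S, edgesAt F u = edgesAt A u)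
    (hFU : ∀ u ∈ U, u ∉ S → edgesAt F u = ∅) : IsRootedSubcubic F S := by
  obtain ⟨f, hf⟩ := card_eq_one.1 hFv
  obtain ⟨hfF, hvf⟩ := mem_edgesAt.1 (hf ▸ mem_singleton_self f)
  have hlinked {D D' : Finset (Sym2 V)} (hD : D ∪ D' = F) (hdisj : Disjoint D D')
      (hne : D.Nonempty) (hf' : f ∈ D') :
      ∃ u ∈ S, (edgesAt D u).Nonempty ∧ (edgesAt D' u).Nonempty := by
    have hDF : D ⊆ F := hD ▸ subset_union_left
    have hfD : f ∉ D := disjoint_right.1 hdisj hf'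
    obtain ⟨u, hu, ⟨d, hd⟩, a, ha⟩ := h.linkedThrough
      (union_sdiff_of_subset (hDF.trans hFA)) disjoint_sdiff hne
      ⟨f, mem_sdiff.2 ⟨hFA hfF, hfD⟩⟩
    rw [mem_edgesAt] at hd ha
    have hdF : d ∈ edgesAt F u := mem_edgesAt.2 ⟨hDF hd.1, hd.2⟩
    have hu : u ∈ U := mem_of_mem_insert_of_ne hu fun huv => by
      rw [huv, hf, mem_singleton] at hdF
      exact hfD (hdF ▸ hd.1)
    have huS : u ∈ S := not_not.1 fun huS => notMem_empty d (hFU u hu huS ▸ hdF)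
    have haF : a ∈ edgesAt F u := hFS u huS ▸ mem_edgesAt.2 ⟨(mem_sdiff.1 ha.1).1, ha.2⟩
    have haD' : a ∈ D' := (mem_union.1 (hD ▸ (mem_edgesAt.1 haF).1)).resolve_left
      (mem_sdiff.1 ha.1).2
    exact ⟨u, huS, ⟨d, mem_edgesAt.2 hd⟩, a, mem_edgesAt.2 ⟨haD', ha.2⟩⟩
  have hSU : S ⊆ insert v U := hS.trans (subset_insert v U)
  refine ⟨fun e he => h.not_isDiag e (hFA he), fun u hu => hFS u hu ▸ h.nonempty_edgesAt u (hSU hu),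
    fun u hu => hFS u hu ▸ h.card_edgesAt_le u (hSU hu), fun D D' hD hdisj hne hne' => ?_,
    f, hfF, v, hvf, fun hvS => hv (hS hvS)⟩
  obtain hfD | hfD' := mem_union.1 (hD ▸ hfF)
  · obtain ⟨u, hu, hu', hu''⟩ := hlinked (union_comm D D' ▸ hD) hdisj.symm hne' hfD
    exact ⟨u, hu, hu'', hu'⟩
  · exact hlinked hD hdisj hne hfD'

lemma exists_isSplitAt (h : IsRootedSubcubic (insert e B) (insert v U)) (heB : e ∉ B)
    (heU : ∀ u ∈ U, u ∉ e) (hBv : #(edgesAt B v) = 2) (hB : ¬LinkedThrough B U) :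
    ∃ F F' S T, F ∪ F' = B ∧ S ∪ T = U ∧ IsSplitAt v F F' S T := by
  unfold LinkedThrough at hB
  push Not at hB
  obtain ⟨F, F', rfl, hdisj, hF, hF', hFF'⟩ := hB
  have hpos {D D' : Finset (Sym2 V)} (hD : D ∪ D' = F ∪ F') (hDD' : Disjoint D D')
      (hne : D.Nonempty) (hsep : ∀ u ∈ U, (edgesAt D u).Nonempty → edgesAt D' u = ∅) :
      0 < #(edgesAt D v) := by
    have heD : e ∉ D := fun heD => heB (hD ▸ mem_union_left D' heD)
    obtain ⟨u, hu, hu₁, hu₂⟩ := h.linkedThrough (F := D) (F' := insert e D')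
      (by rw [union_insert, hD]) (disjoint_insert_right.2 ⟨heD, hDD'⟩) hne (insert_nonempty e D')
    obtain rfl | hu := mem_insert.1 hu
    · exact card_pos.2 hu₁
    · rw [edgesAt_insert_of_notMem D' (heU u hu), hsep u hu hu₁] at hu₂
      exact absurd hu₂ not_nonempty_empty
  have hpos_left := hpos rfl hdisj hF hFF'
  have hpos_right := hpos (union_comm F' F) hdisj.symm hF' fun u hu hne =>
    not_nonempty_iff_eq_empty.1 fun hne' => hne.ne_empty (hFF' u hu hne')
  rw [card_edgesAt_union hdisj] at hBv
  classical
  refine ⟨F, F', {u ∈ U | (edgesAt F u).Nonempty}, {u ∈ U | ¬(edgesAt F u).Nonempty}, rfl,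
    filter_union_filter_not_eq _ U, hdisj, disjoint_filter_filter_not _ _ _, by omega, by omega,
    fun u hu => ?_, fun u hu => not_nonempty_iff_eq_empty.1 (mem_filter.1 hu).2⟩
  exact hFF' u (mem_filter.1 hu).1 (mem_filter.1 hu).2

lemma of_isSplitAt (h : IsRootedSubcubic A (insert v (S ∪ T))) (hv : v ∉ S ∪ T)
    (hsplit : IsSplitAt v F F' S T) (hFF' : F ∪ F' ⊆ A)
    (hA : ∀ u ∈ S, edgesAt (F ∪ F') u = edgesAt A u) : IsRootedSubcubic F S :=
  h.branch hv (subset_union_left.trans hFF') hsplit.card_left subset_union_left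
    (fun u hu => (hsplit.edgesAt_eq hu).trans (hA u hu))
    fun u hu huS => hsplit.edgesAt_left u ((mem_union.1 hu).resolve_left huS)

lemma contract_of_linkedThrough (h : IsRootedSubcubic (insert e B) (insert v U)) (hv : v ∉ U)
    (heU : ∀ u ∈ U, u ∉ e) (hBv : (edgesAt B v).Nonempty) (hB : LinkedThrough B U) :
    IsRootedSubcubic B U where
  not_isDiag f hf := h.not_isDiag f (mem_insert_of_mem hf)
  nonempty_edgesAt u hu :=
    edgesAt_insert_of_notMem B (heU u hu) ▸ h.nonempty_edgesAt u (mem_insert_of_mem hu)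
  card_edgesAt_le u hu :=
    edgesAt_insert_of_notMem B (heU u hu) ▸ h.card_edgesAt_le u (mem_insert_of_mem hu)
  linkedThrough := hB
  exists_root_edge :=
    have ⟨f, hf⟩ := hBv
    ⟨f, (mem_edgesAt.1 hf).1, v, (mem_edgesAt.1 hf).2, hv⟩

lemma insert_of_exists_root_edge (h : IsRootedSubcubic B U) (hBv : (edgesAt B v).Nonempty)
    (hBv3 : #(edgesAt B v) ≤ 3) (hroot : ∃ e ∈ B, ∃ w ∈ e, w ∉ insert v U) :
    IsRootedSubcubic B (insert v U) where
  not_isDiag := h.not_isDiag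
  nonempty_edgesAt := forall_mem_insert _ _ _ |>.2 ⟨hBv, h.nonempty_edgesAt⟩
  card_edgesAt_le := forall_mem_insert _ _ _ |>.2 ⟨hBv3, h.card_edgesAt_le⟩
  linkedThrough := h.linkedThrough.mono (subset_insert v U)
  exists_root_edge := hroot

end IsRootedSubcubic

end RootedSubcubic

section FlowExpansion

variable [Fintype V] {A B F F' : Finset (Sym2 V)} {S T U : Finset V} {e : Sym2 V} {v : V}
  {g g₁ g₂ : ℕ[X]}

/-- Up to a sign, the number of nowhere-zero flows over a field of characteristic two with `q`
elements is `(q - 1) * g (2 - q)`. -/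
def IsFlowExpansion (A : Finset (Sym2 V)) (U : Finset V) (g : ℕ[X]) : Prop :=
  ∀ (K : Type) [Field K] [Fintype K] [CharP K 2],
    (-1 : ℤ) ^ (#A + #U + 1) * flowCount K A U = Nat.card Kˣ * aeval (1 - Nat.card Kˣ : ℤ) g

lemma isFlowExpansion_zero
    (h : ∀ (K : Type) [Field K] [Fintype K] [CharP K 2], flowCount K A U = 0) :
    IsFlowExpansion A U 0 := fun K _ _ _ => by simp [h K]

lemma isFlowExpansion_singleton_empty (e : Sym2 V) : IsFlowExpansion {e} ∅ 1 := fun K _ _ _ => by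
  simp [flowCount_singleton_empty]

lemma IsFlowExpansion.insert_edge (h₁ : IsFlowExpansion B U g₁)
    (h₂ : IsFlowExpansion B (insert v U) g₂) (he : e ∉ B) (hv : v ∉ U) (hve : v ∈ e)
    (heU : ∀ u ∈ U, u ∉ e) :
    IsFlowExpansion (insert e B) (insert v U) (g₁ + g₂) := fun K _ _ _ => by
  have hcount := flowCount_insert_add_flowCount (K := K) he hve heU
  replace h₁ := h₁ K
  replace h₂ := h₂ K
  rw [card_insert_of_notMem hv] at h₂
  rw [card_insert_of_notMem he, card_insert_of_notMem hv, map_add, mul_add, ← h₁, ← h₂, ← hcount]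
  push_cast
  ring

lemma IsFlowExpansion.insert_edge_of_isSplitAt (h₁ : IsFlowExpansion F S g₁)
    (h₂ : IsFlowExpansion F' T g₂) (hsplit : IsSplitAt v F F' S T) (he : e ∉ F ∪ F')
    (hv : v ∉ S ∪ T) (hve : v ∈ e) (heU : ∀ u ∈ S ∪ T, u ∉ e) :
    IsFlowExpansion (insert e (F ∪ F')) (insert v (S ∪ T)) (X * (g₁ * g₂)) := fun K _ _ _ => by
  have hcount := flowCount_insert_add_flowCount (K := K) he hve heU
  obtain ⟨f, hf⟩ := card_eq_one.1 hsplit.card_left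
  obtain ⟨f', hf'⟩ := card_eq_one.1 hsplit.card_right
  have hunits := card_units_mul_flowCount_insert (K := K) hsplit.disjoint_edges hf hf'
    (U := S ∪ T) fun u hu => (mem_union.1 hu).symm.imp (hsplit.edgesAt_left u)
      (hsplit.edgesAt_right u)
  have hprod := flowCount_union (K := K) hsplit.disjoint_edges hsplit.edgesAt_right
    hsplit.edgesAt_left
  rw [card_insert_of_notMem he, card_insert_of_notMem hv,
    card_union_of_disjoint hsplit.disjoint_edges, card_union_of_disjoint hsplit.disjoint_vertices]
  simp only [map_mul, aeval_X]
  have hpos : (Nat.card Kˣ : ℤ) ≠ 0 := by exact_mod_cast Nat.card_pos.ne'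
  zify at hcount hunits hprod
  refine mul_left_cancel₀ hpos ?_
  calc (Nat.card Kˣ : ℤ) * ((-1) ^ (#F + #F' + 1 + (#S + #T + 1) + 1) *
        flowCount K (insert e (F ∪ F')) (insert v (S ∪ T)))
      = (1 - Nat.card Kˣ) * ((-1) ^ (#F + #S + 1) * flowCount K F S) *
          ((-1) ^ (#F' + #T + 1) * flowCount K F' T) := by
        linear_combination (-1) ^ (#F + #F' + #S + #T + 3) *
          (Nat.card Kˣ * hcount - hunits + (Nat.card Kˣ - 1) * hprod)
    _ = _ := by
        rw [h₁ K, h₂ K]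
        ring

lemma IsFlowExpansion.coeff_zero_eq_zero (h : IsFlowExpansion A U g) (hv : v ∈ U)
    (hdeg : #(edgesAt A v) = 3) : g.coeff 0 = 0 := by
  have hcount : flowCount (ZMod 2) A U = 0 := flowCount_eq_zero fun φ hφ => by
    have hone : ∀ f ∈ edgesAt A v, φ f = 1 := fun f hf =>
      (Fin.eq_one_of_ne_zero _ (hφ.ne_zero (mem_edgesAt.1 hf).1))
    have := hφ.netFlow_eq_zero v hv
    rw [hφ.netFlow_eq_sum_edgesAt, sum_congr rfl hone, sum_const, hdeg] at this
    exact absurd this (by decide)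
  have hcard : Nat.card (ZMod 2)ˣ = 1 := by simp
  have := h (ZMod 2)
  rw [hcount, hcard] at this
  exact_mod_cast (by simpa [aeval_def, eval₂_at_zero] using this.symm : (g.coeff 0 : ℤ) = 0)

end FlowExpansion

section PositiveFlowExpansion

variable [Fintype V] {A B F F' : Finset (Sym2 V)} {S T U : Finset V} {e : Sym2 V} {v w : V}
  {g g₁ g₂ : ℕ[X]}

/-- A flow expansion whose low coefficients are positive where the induction needs it: the constant
one if all degrees are two and the linear one in the 3-connected case. -/
structure IsPositiveFlowExpansion (A : Finset (Sym2 V)) (U : Finset V) (g : ℕ[X]) : Prop where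
  isFlowExpansion : IsFlowExpansion A U g
  coeff_zero_pos : (∀ u ∈ U, #(edgesAt A u) = 2) → 0 < g.coeff 0
  coeff_one_pos : IsRootedThreeConnected A U → 0 < g.coeff 1

lemma isPositiveFlowExpansion_singleton_empty (e : Sym2 V) : IsPositiveFlowExpansion {e} ∅ 1 where
  isFlowExpansion := isFlowExpansion_singleton_empty e
  coeff_zero_pos _ := by simp
  coeff_one_pos h := by simpa [HasCubicVertex] using h.hasCubicVertex

lemma isPositiveFlowExpansion_zero_of_leaf (hv : v ∈ U) (hdeg : #(edgesAt A v) = 1) :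
    IsPositiveFlowExpansion A U 0 where
  isFlowExpansion := isFlowExpansion_zero fun K _ _ _ =>
    have ⟨_, he⟩ := card_eq_one.1 hdeg
    flowCount_eq_zero_of_edgesAt_eq_singleton hv he
  coeff_zero_pos h := by simp [h v hv] at hdeg
  coeff_one_pos h := by simpa [hdeg] using h.card_edgesAt v hv

lemma IsRootedSubcubic.isPositiveFlowExpansion_zero_of_bridge (h : IsRootedSubcubic A U)
    (he : e ∈ A) (hve : v ∈ e) (hv : v ∈ U) (hwe : w ∈ e) (hw : w ∉ U)
    (hbridge : ∀ f ∈ A, f ≠ e → ∀ u ∈ f, u ∈ U) (hdeg : #(edgesAt A v) = 3) :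
    IsPositiveFlowExpansion A U 0 where
  isFlowExpansion := isFlowExpansion_zero fun K _ _ _ =>
    flowCount_eq_zero_of_bridge h.not_isDiag he hve hv hwe hw hbridge
  coeff_zero_pos h := by simp [h v hv] at hdeg
  coeff_one_pos h := by
    have hcut : cutSize A U Uᶜ ≤ #{e} := cutSize_le_card disjoint_compl_right fun x _ y hy hxy =>
      mem_singleton.2 <| not_not.1 fun hne =>
        mem_compl.1 hy (hbridge _ hxy hne y (Sym2.mem_mk_right x y))
    exact absurd (h.two_le_cutSize_compl.trans hcut) (by simp)

lemma IsPositiveFlowExpansion.insert_edge_of_card_eq_one (hg : IsPositiveFlowExpansion B U g)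
    (h : IsRootedSubcubic B U) (he : e ∉ B) (hv : v ∉ U) (hve : v ∈ e) (heU : ∀ u ∈ U, u ∉ e)
    (hBv : #(edgesAt B v) = 1) : IsPositiveFlowExpansion (insert e B) (insert v U) g where
  isFlowExpansion := add_zero g ▸ hg.isFlowExpansion.insert_edge
    (isPositiveFlowExpansion_zero_of_leaf (mem_insert_self v U) hBv).isFlowExpansion he hv hve heU
  coeff_zero_pos hdeg := hg.coeff_zero_pos fun u hu =>
    edgesAt_insert_of_notMem B (heU u hu) ▸ hdeg u (mem_insert_of_mem hu)
  coeff_one_pos h3 := by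
    have hdeg : #(edgesAt (insert e B) v) = 2 := by
      rw [edgesAt_insert_of_mem B hve, card_insert_of_notMem (by simp [he]), hBv]
    have hU : U.Nonempty := by
      obtain ⟨u, hu, hu3⟩ := h3.hasCubicVertex
      exact ⟨u, mem_of_mem_insert_of_ne hu (by rintro rfl; omega)⟩
    exact hg.coeff_one_pos (h3.contract_of_card_edgesAt_eq_two hv
      (fun u hu => (edgesAt_insert_of_notMem B (heU u hu)).symm) hdeg
      ((h.cutSize_singleton heU hv hU).trans hBv))

lemma IsPositiveFlowExpansion.coeff_zero_pos_of_isSplitAt (hg : IsPositiveFlowExpansion F S g)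
    (h : IsRootedThreeConnected (insert e (F ∪ F')) (insert v (S ∪ T)))
    (hsplit : IsSplitAt v F F' S T) (hv : v ∉ S ∪ T) (heU : ∀ u ∈ S ∪ T, u ∉ e)
    (hdeg : #(edgesAt (insert e (F ∪ F')) v) = 3) : 0 < g.coeff 0 := by
  have hcutST : cutSize (insert e (F ∪ F')) S T = 0 := by
    rw [cutSize_insert_edge _ _ fun u hu => heU u (mem_union_right S hu)]
    exact cutSize_eq_zero hsplit.edgesAt_right hsplit.edgesAt_left
  have hcutSv : cutSize (insert e (F ∪ F')) S {v} ≤ 1 := by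
    rw [cutSize_comm, cutSize_insert_edge _ _ fun u hu => heU u (mem_union_left T hu),
      cutSize_comm, ← cutSize_congr fun u hu => hsplit.edgesAt_eq hu, cutSize_comm,
      ← hsplit.card_left]
    exact cutSize_singleton_le fun hvS => hv (mem_union_left T hvS)
  refine hg.coeff_zero_pos fun u hu => ?_
  rw [hsplit.edgesAt_eq hu, ← edgesAt_insert_of_notMem _ (heU u (mem_union_left T hu))]
  exact h.card_edgesAt_eq_two_of_branch hv hdeg hsplit.disjoint_vertices rfl hcutST hcutSv u hu

lemma IsPositiveFlowExpansion.insert_edge_of_isSplitAt (hg₁ : IsPositiveFlowExpansion F S g₁)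
    (hg₂ : IsPositiveFlowExpansion F' T g₂) (hsplit : IsSplitAt v F F' S T) (he : e ∉ F ∪ F')
    (hv : v ∉ S ∪ T) (hve : v ∈ e) (heU : ∀ u ∈ S ∪ T, u ∉ e) :
    IsPositiveFlowExpansion (insert e (F ∪ F')) (insert v (S ∪ T)) (X * (g₁ * g₂)) := by
  have hdeg : #(edgesAt (insert e (F ∪ F')) v) = 3 := by
    rw [edgesAt_insert_of_mem _ hve, card_insert_of_notMem (mt (fun h => (mem_edgesAt.1 h).1) he),
      card_edgesAt_union hsplit.disjoint_edges, hsplit.card_left, hsplit.card_right]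
  refine ⟨hg₁.isFlowExpansion.insert_edge_of_isSplitAt hg₂.isFlowExpansion hsplit he hv hve heU,
    fun h2 => by simp [h2 v (mem_insert_self v _)] at hdeg, fun h3 => ?_⟩
  have hpos₁ := hg₁.coeff_zero_pos_of_isSplitAt h3 hsplit hv heU hdeg
  rw [union_comm F, union_comm S] at h3
  rw [union_comm F] at hdeg
  rw [union_comm S] at hv heU
  have hpos₂ := hg₂.coeff_zero_pos_of_isSplitAt h3 hsplit.symm hv heU hdeg
  rw [coeff_X_mul, mul_coeff_zero]
  exact mul_pos hpos₁ hpos₂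

lemma IsPositiveFlowExpansion.insert_edge_of_card_eq_two (hg₁ : IsPositiveFlowExpansion B U g₁)
    (hg₂ : IsPositiveFlowExpansion B (insert v U) g₂) (h : IsRootedSubcubic B U) (he : e ∉ B)
    (hv : v ∉ U) (hve : v ∈ e) (heU : ∀ u ∈ U, u ∉ e) (hBv : #(edgesAt B v) = 2) :
    IsPositiveFlowExpansion (insert e B) (insert v U) (g₁ + g₂) := by
  have hdeg : #(edgesAt (insert e B) v) = 3 := by
    rw [edgesAt_insert_of_mem B hve, card_insert_of_notMem (by simp [he]), hBv]
  have hB : ∀ u ∈ U, edgesAt B u = edgesAt (insert e B) u :=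
    fun u hu => (edgesAt_insert_of_notMem B (heU u hu)).symm
  have hg := hg₁.isFlowExpansion.insert_edge hg₂.isFlowExpansion he hv hve heU
  refine ⟨hg, fun h2 => by simp [h2 v (mem_insert_self v _)] at hdeg, fun h3 => ?_⟩
  have hcubic : HasCubicVertex (insert e B) U := by
    by_contra hcubic
    have hpos : 0 < g₁.coeff 0 := hg₁.coeff_zero_pos fun u hu => hB u hu ▸
      (h3.card_edgesAt u (mem_insert_of_mem hu)).resolve_right fun hu3 => hcubic ⟨u, hu, hu3⟩
    have hzero := hg.coeff_zero_eq_zero (mem_insert_self v U) hdeg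
    rw [coeff_add] at hzero
    omega
  have hcut : cutSize (insert e B) {v} U = 2 :=
    (h.cutSize_singleton heU hv (hcubic.imp fun _ hu => hu.1)).trans hBv
  rw [coeff_add]
  by_cases hinner : ∃ S T, Disjoint S T ∧ S ∪ T = U ∧ HasCubicVertex (insert e B) S ∧
      HasCubicVertex (insert e B) T ∧ cutSize (insert e B) S T ≤ 1
  · obtain ⟨S, T, hdisj, hST, hS, hT, hle⟩ := hinner
    have := hg₂.coeff_one_pos (h3.delete_of_cutSize_le_one hv hB hBv hcut hdisj hST hS hT hle)
    omega
  · have hroot : 2 ≤ cutSize (insert e B) U Uᶜ := by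
      rw [cutSize_compl_eq_add _ _ hv, cutSize_comm _ U {v}, hcut]
      exact Nat.le_add_right 2 _
    have := hg₁.coeff_one_pos (h3.contract hv hB hcubic hroot fun S T hdisj hST hS hT =>
      not_lt.1 fun hlt => hinner ⟨S, T, hdisj, hST, hS, hT, Nat.le_of_lt_succ hlt⟩)
    omega

lemma exists_isPositiveFlowExpansion_insert (h : IsRootedSubcubic (insert e B) (insert v U))
    (he : e ∉ B) (hv : v ∉ U) (hve : v ∈ e) (hwe : w ∈ e) (hw : w ∉ insert v U)
    (ih : ∀ F ⊆ B, ∀ S, IsRootedSubcubic F S → ∃ g, IsPositiveFlowExpansion F S g) :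
    ∃ g, IsPositiveFlowExpansion (insert e B) (insert v U) g := by
  have heU : ∀ u ∈ U, u ∉ e := fun u hu hue => by
    obtain rfl := (Sym2.mem_and_mem_iff (ne_of_mem_of_not_mem (mem_insert_self v U) hw)).1
      ⟨hve, hwe⟩
    obtain rfl | rfl := Sym2.mem_iff.1 hue
    exacts [hv hu, hw (mem_insert_of_mem hu)]
  have hB : ∀ u ∈ U, edgesAt B u = edgesAt (insert e B) u :=
    fun u hu => (edgesAt_insert_of_notMem B (heU u hu)).symm
  have hdeg : #(edgesAt (insert e B) v) = #(edgesAt B v) + 1 := by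
    rw [edgesAt_insert_of_mem B hve, card_insert_of_notMem (by simp [he])]
  have hdeg3 := h.card_edgesAt_le v (mem_insert_self v U)
  obtain hBv | hBv | hBv : #(edgesAt B v) = 0 ∨ #(edgesAt B v) = 1 ∨ #(edgesAt B v) = 2 := by omega
  · exact ⟨0, isPositiveFlowExpansion_zero_of_leaf (mem_insert_self v U) (by omega)⟩
  · have hBU := h.branch hv (subset_insert e B) hBv subset_rfl hB fun u hu hu' => absurd hu hu'
    obtain ⟨g, hg⟩ := ih B subset_rfl U hBU
    exact ⟨g, hg.insert_edge_of_card_eq_one hBU he hv hve heU hBv⟩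
  by_cases hlinked : LinkedThrough B U
  · have hBv' : (edgesAt B v).Nonempty := card_pos.1 (by omega)
    have hBU := h.contract_of_linkedThrough hv heU hBv' hlinked
    by_cases hroot : ∃ f ∈ B, ∃ x ∈ f, x ∉ insert v U
    · obtain ⟨g₁, hg₁⟩ := ih B subset_rfl U hBU
      obtain ⟨g₂, hg₂⟩ := ih B subset_rfl (insert v U)
        (hBU.insert_of_exists_root_edge hBv' (by omega) hroot)
      exact ⟨g₁ + g₂, hg₁.insert_edge_of_card_eq_two hg₂ hBU he hv hve heU hBv⟩
    · push Not at hroot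
      exact ⟨0, h.isPositiveFlowExpansion_zero_of_bridge (mem_insert_self e B) hve
        (mem_insert_self v U) hwe hw
        (fun f hf hfe => hroot f (mem_of_mem_insert_of_ne hf hfe)) (by omega)⟩
  · obtain ⟨F, F', S, T, rfl, rfl, hsplit⟩ := h.exists_isSplitAt he heU hBv hlinked
    obtain ⟨g₁, hg₁⟩ := ih F subset_union_left S
      (h.of_isSplitAt hv hsplit (subset_insert e _) fun u hu => hB u (mem_union_left T hu))
    rw [union_comm F, union_comm S] at h hB
    obtain ⟨g₂, hg₂⟩ := ih F' subset_union_right T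
      (h.of_isSplitAt (union_comm S T ▸ hv) hsplit.symm (subset_insert e _)
        fun u hu => hB u (mem_union_left S hu))
    exact ⟨X * (g₁ * g₂), hg₁.insert_edge_of_isSplitAt hg₂ hsplit he hv hve heU⟩

theorem exists_isPositiveFlowExpansion (h : IsRootedSubcubic A U) :
    ∃ g, IsPositiveFlowExpansion A U g := by
  induction A using Finset.strongInduction generalizing U with
  | H A ih =>
    obtain ⟨e, he, w, hwe, hw⟩ := h.exists_root_edge
    by_cases heU : ∀ u ∈ U, u ∉ e
    · obtain ⟨rfl, rfl⟩ := h.eq_singleton_and_eq_empty he heU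
      exact ⟨1, isPositiveFlowExpansion_singleton_empty e⟩
    · push Not at heU
      obtain ⟨v, hvU, hve⟩ := heU
      rw [← insert_erase he, ← insert_erase hvU] at h ⊢
      exact exists_isPositiveFlowExpansion_insert h (notMem_erase e A) (notMem_erase v U) hve hwe
        (by rwa [insert_erase hvU]) fun F hF S => ih F (hF.trans_ssubset (erase_ssubset he))

end PositiveFlowExpansion

/-- The cycle rank (first Betti number) of the graph with edge set `Z`. The subtraction never
truncates, see `cycleRank_add_card`. -/
noncomputable def cycleRank [Fintype V] (Z : Finset (Sym2 V)) : ℕ :=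
  #Z + Nat.card (SimpleGraph.fromEdgeSet (Z : Set (Sym2 V))).ConnectedComponent - Fintype.card V

section Dimension

open scoped Matrix

variable {K : Type*} [Field K]

variable (K) in
/-- The incidence matrix of the graph with edge set `Z`. It is unsigned, hence computes net flows
only in characteristic two. -/
def incidenceMatrix (Z : Finset (Sym2 V)) : Matrix V Z K :=
  Matrix.of fun v e => if v ∈ e.1 then 1 else 0

variable [Fintype V]

lemma incidenceMatrix_mulVec {Z : Finset (Sym2 V)} {φ : Sym2 V → K} (hφ : ∀ e ∉ Z, φ e = 0) :
    incidenceMatrix K Z *ᵥ (fun e => φ e) = netFlow φ := by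
  ext v
  simp only [Matrix.mulVec, dotProduct, incidenceMatrix, Matrix.of_apply, ite_mul, one_mul,
    zero_mul]
  rw [sum_coe_sort Z fun e => if v ∈ e then φ e else 0, netFlow, sum_filter]
  exact sum_subset (subset_univ Z) fun e _ he => by rw [hφ e he, ite_self]

lemma incidenceMatrix_transpose_mulVec {Z : Finset (Sym2 V)} (p : V → K) {a b : V} (hab : a ≠ b)
    (h : s(a, b) ∈ Z) : ((incidenceMatrix K Z)ᵀ *ᵥ p) ⟨s(a, b), h⟩ = p a + p b := by
  have hends : ({v | v ∈ s(a, b)} : Finset V) = {a, b} := by ext v; simp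
  simp only [Matrix.mulVec, dotProduct, incidenceMatrix, Matrix.transpose_apply, Matrix.of_apply,
    ite_mul, one_mul, zero_mul]
  rw [← sum_filter, hends, sum_pair hab]

variable [CharP K 2]

lemma ker_incidenceMatrix_transpose {Z : Finset (Sym2 V)} (hZ : ∀ e ∈ Z, ¬e.IsDiag) :
    LinearMap.ker (incidenceMatrix K Z)ᵀ.mulVecLin = LinearMap.range (LinearMap.funLeft K K
      (SimpleGraph.fromEdgeSet (Z : Set (Sym2 V))).connectedComponentMk) := by
  ext p
  rw [LinearMap.mem_ker, LinearMap.mem_range, Matrix.mulVecLin_apply]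
  constructor
  · intro h
    have hadj {a b : V} (hab : (SimpleGraph.fromEdgeSet (Z : Set (Sym2 V))).Adj a b) :
        p a = p b := by
      obtain ⟨hZab, hne⟩ := (SimpleGraph.fromEdgeSet_adj _).1 hab
      rw [← CharTwo.add_eq_zero, ← incidenceMatrix_transpose_mulVec p hne (mem_coe.1 hZab), h,
        Pi.zero_apply]
    have hwalk {a b : V} (q : (SimpleGraph.fromEdgeSet (Z : Set (Sym2 V))).Walk a b) :
        p a = p b := by
      induction q with
      | nil => rfl
      | cons hab _ ih => exact (hadj hab).trans ih
    exact ⟨SimpleGraph.ConnectedComponent.lift p fun _ _ q _ => hwalk q, rfl⟩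
  · rintro ⟨f, rfl⟩
    ext ⟨e, he⟩
    induction e with | _ a b
    have hab : a ≠ b := hZ _ he
    have hcomp := SimpleGraph.ConnectedComponent.sound
      ((SimpleGraph.fromEdgeSet_adj (Z : Set (Sym2 V))).2 ⟨mem_coe.2 he, hab⟩).reachable
    rw [incidenceMatrix_transpose_mulVec _ hab he]
    simp only [LinearMap.funLeft_apply, hcomp, CharTwo.add_self_eq_zero, Pi.zero_apply]

lemma finrank_ker_incidenceMatrix_add_card {Z : Finset (Sym2 V)} (hZ : ∀ e ∈ Z, ¬e.IsDiag) :
    Module.finrank K (LinearMap.ker (incidenceMatrix K Z).mulVecLin) + Fintype.card V =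
      #Z + Nat.card (SimpleGraph.fromEdgeSet (Z : Set (Sym2 V))).ConnectedComponent := by
  have hker : Module.finrank K (LinearMap.ker (incidenceMatrix K Z)ᵀ.mulVecLin) =
      Nat.card (SimpleGraph.fromEdgeSet (Z : Set (Sym2 V))).ConnectedComponent := by
    have hsurj : Surjective
        (SimpleGraph.fromEdgeSet (Z : Set (Sym2 V))).connectedComponentMk := Quot.mk_surjective
    classical
    rw [ker_incidenceMatrix_transpose hZ, LinearMap.finrank_range_of_inj
      (LinearMap.funLeft_injective_of_surjective K K _ hsurj),
      Module.finrank_fintype_fun_eq_card, Nat.card_eq_fintype_card]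
  have hdim := LinearMap.finrank_range_add_finrank_ker (incidenceMatrix K Z).mulVecLin
  have hdim' := LinearMap.finrank_range_add_finrank_ker (incidenceMatrix K Z)ᵀ.mulVecLin
  have hrank := Matrix.rank_transpose (incidenceMatrix K Z)
  rw [Module.finrank_fintype_fun_eq_card, Fintype.card_coe] at hdim
  rw [Module.finrank_fintype_fun_eq_card, hker] at hdim'
  rw [Matrix.rank, Matrix.rank] at hrank
  lia

end Dimension

section InclusionExclusion

variable [Fintype V] {K : Type*} [Field K] [Fintype K] {A Z : Finset (Sym2 V)}
  {φ : Sym2 V → K}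

variable (K) in
open scoped Classical in
/-- The `K`-valued flows supported in `Z`, conserved at every vertex but possibly zero on some
edges of `Z`. -/
noncomputable def flowsOn (Z : Finset (Sym2 V)) : Finset (Sym2 V → K) :=
  {φ | (∀ e ∉ Z, φ e = 0) ∧ netFlow φ = 0}

@[simp]
lemma mem_flowsOn : φ ∈ flowsOn K Z ↔ (∀ e ∉ Z, φ e = 0) ∧ netFlow φ = 0 := by simp [flowsOn]

lemma card_flowsOn_eq_natCard_ker :
    #(flowsOn K Z) = Nat.card (LinearMap.ker (incidenceMatrix K Z).mulVecLin) := by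
  rw [← Nat.card_eq_finsetCard]
  refine Nat.card_eq_of_bijective (fun φ => ⟨fun e => φ.1 e, ?_⟩) ⟨fun φ ψ h => ?_, fun ψ => ?_⟩
  · have hφ := mem_flowsOn.1 φ.2
    exact (incidenceMatrix_mulVec hφ.1).trans hφ.2
  · ext e
    by_cases he : e ∈ Z
    · exact congr_fun (Subtype.ext_iff.1 h) ⟨e, he⟩
    · rw [(mem_flowsOn.1 φ.2).1 e he, (mem_flowsOn.1 ψ.2).1 e he]
  · let φ : Sym2 V → K := fun e => if he : e ∈ Z then ψ.1 ⟨e, he⟩ else 0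
    have hφ : ∀ e ∉ Z, φ e = 0 := fun e he => dif_neg he
    have hφψ : (fun e : Z => φ e) = ψ.1 := funext fun e => dif_pos e.2
    refine ⟨⟨φ, mem_flowsOn.2 ⟨hφ, ?_⟩⟩, Subtype.ext hφψ⟩
    rw [← incidenceMatrix_mulVec hφ, hφψ]
    exact ψ.2

lemma card_flowsOn [CharP K 2] (hZ : ∀ e ∈ Z, ¬e.IsDiag) :
    #(flowsOn K Z) = Fintype.card K ^ cycleRank Z := by
  rw [card_flowsOn_eq_natCard_ker, Module.natCard_eq_pow_finrank (K := K), Nat.card_eq_fintype_card,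
    cycleRank, ← finrank_ker_incidenceMatrix_add_card (K := K) hZ, Nat.add_sub_cancel]

lemma mem_flowsOn_sdiff :
    φ ∈ flowsOn K (A \ Z) ↔ φ ∈ flowsOn K A ∧ ∀ e ∈ Z, φ e = 0 := by
  simp only [mem_flowsOn, mem_sdiff, not_and_or, not_not, or_imp, forall_and]
  tauto

lemma mem_nowhereZeroFlows_univ :
    φ ∈ nowhereZeroFlows K A univ ↔ φ ∈ flowsOn K A ∧ ∀ e ∈ A, φ e ≠ 0 := by
  rw [mem_nowhereZeroFlows, mem_flowsOn]
  refine ⟨fun h => ⟨⟨fun e => h.eq_zero, funext fun v => h.netFlow_eq_zero v (mem_univ v)⟩,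
    fun e => h.ne_zero⟩, fun ⟨⟨hA, hφ⟩, h⟩ => ⟨fun e => ⟨?_, h e⟩, fun v _ => congr_fun hφ v⟩⟩
  exact not_imp_comm.1 (hA e)

lemma flowCount_univ_eq_sum_card_flowsOn (A : Finset (Sym2 V)) :
    (flowCount K A univ : ℤ) = ∑ Z ∈ A.powerset, (-1) ^ (#A - #Z) * (#(flowsOn K Z) : ℤ) := by
  classical
  have hsdiff {t : Finset (Sym2 V)} : flowsOn K (A \ t) =
      {φ ∈ t.inf fun e => ({φ | φ e = 0} : Finset (Sym2 V → K)) | φ ∈ flowsOn K A} := by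
    ext φ
    simp [mem_flowsOn_sdiff, mem_inf, and_comm, -mem_flowsOn]
  have hnowhere : nowhereZeroFlows K A univ =
      {φ ∈ A.inf fun e => ({φ | φ e = 0} : Finset (Sym2 V → K))ᶜ | φ ∈ flowsOn K A} := by
    ext φ
    simp [mem_nowhereZeroFlows_univ, mem_inf, and_comm, -mem_flowsOn, -mem_nowhereZeroFlows]
  rw [flowCount, hnowhere, card_filter, Nat.cast_sum, inclusion_exclusion_sum_inf_compl]
  refine sum_nbij' (A \ ·) (A \ ·) ?_ ?_ ?_ ?_ ?_
  · simp
  · simp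
  · simp +contextual
  · simp +contextual
  · intro t ht
    rw [hsdiff, card_filter, Nat.cast_sum, smul_eq_mul, card_sdiff_of_subset (mem_powerset.1 ht),
      Nat.sub_sub_self (card_le_card (mem_powerset.1 ht))]

end InclusionExclusion

lemma cycleRank_add_card {V : Type*} [Fintype V] {Z : Finset (Sym2 V)} (hZ : ∀ e ∈ Z, ¬e.IsDiag) :
    cycleRank Z + Fintype.card V =
      #Z + Nat.card (SimpleGraph.fromEdgeSet (Z : Set (Sym2 V))).ConnectedComponent := by
  classical
  exact Nat.sub_add_cancel
    (finrank_ker_incidenceMatrix_add_card (K := ZMod 2) hZ ▸ Nat.le_add_left _ _)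

lemma cycleRank_mono {V : Type*} [Fintype V] {Y Z : Finset (Sym2 V)}
    (hZ : ∀ e ∈ Z, ¬e.IsDiag) (hYZ : Y ⊆ Z) : cycleRank Y ≤ cycleRank Z := by
  classical
  have hflows : flowsOn (ZMod 2) Y ⊆ flowsOn (ZMod 2) Z := fun φ hφ => by
    rw [mem_flowsOn] at hφ ⊢
    exact ⟨fun e he => hφ.1 e (mt (@hYZ e) he), hφ.2⟩
  have hcard := card_le_card hflows
  rw [card_flowsOn fun e he => hZ e (hYZ he), card_flowsOn hZ, ZMod.card] at hcard
  exact (Nat.pow_le_pow_iff_right one_lt_two).1 hcard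

section FlowPoly

variable {V : Type} [Fintype V] {G : SimpleGraph V} [DecidableRel G.Adj]

variable (G) in
lemma flowPoly_eq_sum_cycleRank : flowPoly G =
    ∑ Z ∈ G.edgeFinset.powerset, (-1 : ℤ) ^ (#G.edgeFinset - #Z) • X ^ cycleRank Z := by
  rw [flowPoly, Set.Finite.toFinset_eq_toFinset, ← SimpleGraph.edgeFinset]
  rfl

variable (G) in
theorem eval_flowPoly [DecidableEq V] (K : Type*) [Field K] [Fintype K] [CharP K 2] :
    (flowPoly G).eval (Fintype.card K : ℤ) = flowCount K G.edgeFinset univ := by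
  rw [flowCount_univ_eq_sum_card_flowsOn, flowPoly_eq_sum_cycleRank, eval_finsetSum]
  refine sum_congr rfl fun Z hZ => ?_
  rw [card_flowsOn fun e he => G.not_isDiag_of_mem_edgeFinset (mem_powerset.1 hZ he)]
  simp

lemma fromEdgeSet_eq_deleteEdges [DecidableEq V] {Z : Finset (Sym2 V)} (hZ : Z ⊆ G.edgeFinset) :
    SimpleGraph.fromEdgeSet (Z : Set (Sym2 V)) = G.deleteEdges ↑(G.edgeFinset \ Z) := by
  ext a b
  have hab : s(a, b) ∈ Z → G.Adj a b := fun h => G.mem_edgeFinset.1 (hZ h)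
  have hne : G.Adj a b → a ≠ b := SimpleGraph.Adj.ne
  simp only [SimpleGraph.fromEdgeSet_adj, SimpleGraph.deleteEdges_adj, coe_sdiff, Set.mem_sdiff,
    mem_coe, SimpleGraph.mem_edgeFinset, SimpleGraph.mem_edgeSet]
  tauto

lemma natDegree_flowPoly_le : (flowPoly G).natDegree ≤ cycleRank G.edgeFinset := by
  rw [flowPoly_eq_sum_cycleRank]
  refine natDegree_sum_le_of_forall_le _ _ fun Z hZ => ?_
  exact (natDegree_smul_le _ _).trans ((natDegree_X_pow_le _).trans
    (cycleRank_mono (fun e he => G.not_isDiag_of_mem_edgeFinset he) (mem_powerset.1 hZ)))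

section EdgeConnected

variable [Nonempty V] {Z : Finset (Sym2 V)} {i j k : ℕ}

lemma cycleRank_add_card_eq_card_add_one [DecidableEq V] (h : G.IsEdgeConnected k)
    (hZ : Z ⊆ G.edgeFinset) (hcard : #(G.edgeFinset \ Z) < k) :
    cycleRank Z + Fintype.card V = #Z + 1 := by
  have hconn : (G.deleteEdges ↑(G.edgeFinset \ Z)).Preconnected := fun u v =>
    h u v (by rwa [Set.encard_coe_eq_coe_finsetCard, Nat.cast_lt])
  have := hconn.subsingleton_connectedComponent
  rw [cycleRank_add_card fun e he => G.not_isDiag_of_mem_edgeFinset (hZ he),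
    fromEdgeSet_eq_deleteEdges hZ, Nat.card_of_subsingleton
      ((G.deleteEdges ↑(G.edgeFinset \ Z)).connectedComponentMk (Classical.arbitrary V))]

lemma cycleRank_edgeFinset_add_card (h : G.IsEdgeConnected 1) :
    cycleRank G.edgeFinset + Fintype.card V = #G.edgeFinset + 1 := by
  classical
  exact cycleRank_add_card_eq_card_add_one h subset_rfl (by simp)

lemma cycleRank_add_card_sdiff [DecidableEq V] (h : G.IsEdgeConnected k) (hZ : Z ⊆ G.edgeFinset)
    (hcard : #(G.edgeFinset \ Z) < k) :
    cycleRank Z + #(G.edgeFinset \ Z) = cycleRank G.edgeFinset := by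
  have hrankZ := cycleRank_add_card_eq_card_add_one h hZ hcard
  have hrank := cycleRank_edgeFinset_add_card fun u v => (h u v).anti (Nat.one_le_of_lt hcard)
  have := card_sdiff_add_card_eq_card hZ
  lia

lemma cycleRank_add_eq_iff [DecidableEq V] (h : G.IsEdgeConnected k) (hi : i + 1 < k)
    (hZ : Z ⊆ G.edgeFinset) :
    cycleRank Z + i = cycleRank G.edgeFinset ↔ #(G.edgeFinset \ Z) = i := by
  obtain hlt | hge := lt_or_ge #(G.edgeFinset \ Z) k
  · rw [← cycleRank_add_card_sdiff h hZ hlt]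
    lia
  · have hcardZ := card_sdiff_add_card_eq_card hZ
    obtain ⟨Y, hZY, hYE, hY⟩ := exists_subsuperset_card_eq hZ
      (n := #G.edgeFinset - (i + 1)) (by lia) (Nat.sub_le _ _)
    have hcardY := card_sdiff_add_card_eq_card hYE
    have hrank := cycleRank_add_card_sdiff h hYE (by lia)
    have hmono := cycleRank_mono (fun e he => G.not_isDiag_of_mem_edgeFinset (hYE he)) hZY
    lia

theorem coeff_flowPoly (h : G.IsEdgeConnected k) (hi : i + 1 < k)
    (hij : j + i = cycleRank G.edgeFinset) :
    (flowPoly G).coeff j = (-1) ^ i * (#G.edgeFinset).choose i := by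
  classical
  have hcard : #{Z ∈ G.edgeFinset.powerset | #(G.edgeFinset \ Z) = i} =
      (#G.edgeFinset).choose i := by
    rw [← card_powersetCard]
    refine card_nbij' (G.edgeFinset \ ·) (G.edgeFinset \ ·) ?_ ?_ ?_ ?_ <;> intro Z <;>
      simp +contextual [mem_powersetCard]
  have hfilter : {Z ∈ G.edgeFinset.powerset | cycleRank Z = j} =
      {Z ∈ G.edgeFinset.powerset | #(G.edgeFinset \ Z) = i} := filter_congr fun Z hZ => by
    rw [← cycleRank_add_eq_iff h hi (mem_powerset.1 hZ), ← hij, add_left_inj]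
  rw [flowPoly_eq_sum_cycleRank, finsetSum_coeff]
  simp only [coeff_smul, coeff_X_pow, smul_eq_mul, mul_ite, mul_one, mul_zero, eq_comm (a := j)]
  rw [← sum_filter, hfilter, sum_congr rfl fun Z hZ => ?_, sum_const, hcard, nsmul_eq_mul,
    mul_comm]
  obtain ⟨hZ, hi⟩ := mem_filter.1 hZ
  rw [← card_sdiff_of_subset (mem_powerset.1 hZ), hi]

lemma natDegree_flowPoly (h : G.IsEdgeConnected 2) :
    (flowPoly G).natDegree = cycleRank G.edgeFinset := by
  refine natDegree_flowPoly_le.antisymm (le_natDegree_of_ne_zero ?_)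
  simp [coeff_flowPoly h one_lt_two (add_zero (cycleRank G.edgeFinset))]

lemma nextCoeff_flowPoly (h : G.IsEdgeConnected 3) (hpos : 0 < cycleRank G.edgeFinset) :
    (flowPoly G).nextCoeff = -(#G.edgeFinset : ℤ) := by
  have hdeg := natDegree_flowPoly fun u v => (h u v).anti (Nat.le_succ 2)
  rw [nextCoeff_of_natDegree_pos (hdeg ▸ hpos), hdeg,
    coeff_flowPoly h (Nat.lt_succ_self 2) (Nat.sub_add_cancel hpos)]
  simp

end EdgeConnected

end FlowPoly

lemma monic_flowPoly {V : Type} [Fintype V] [Nonempty V] {G : SimpleGraph V}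
    (h : G.IsEdgeConnected 2) : (flowPoly G).Monic := by
  classical
  rw [Monic, leadingCoeff, natDegree_flowPoly h]
  simp [coeff_flowPoly h one_lt_two (add_zero (cycleRank G.edgeFinset))]

section EdgeConnected

variable [Fintype V] {G : SimpleGraph V} [DecidableRel G.Adj] {S T : Finset V} {v w : V} {k : ℕ}

lemma card_edgesAt_edgeFinset (v : V) : #(edgesAt G.edgeFinset v) = G.degree v := by
  rw [← G.card_incidenceFinset_eq_degree, G.incidenceFinset_eq_filter, edgesAt]

lemma le_cutSize_compl (h : G.IsEdgeConnected k) (hv : v ∈ S) (hw : w ∉ S) :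
    k ≤ cutSize G.edgeFinset S Sᶜ := by
  by_contra! hlt
  let boundary : Finset (Sym2 V) :=
    ({p ∈ S ×ˢ Sᶜ | s(p.1, p.2) ∈ G.edgeFinset} : Finset (V × V)).image fun p => s(p.1, p.2)
  have hcard : (boundary : Set (Sym2 V)).encard < k := by
    rw [Set.encard_coe_eq_coe_finsetCard, Nat.cast_lt]
    exact card_image_le.trans_lt hlt
  obtain ⟨q⟩ := h v w hcard
  obtain ⟨d, -, hfst, hsnd⟩ := q.exists_boundary_dart S hv hw
  obtain ⟨hadj, hd⟩ := SimpleGraph.deleteEdges_adj.1 d.adj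
  refine hd (mem_image.2 ⟨(d.fst, d.snd), ?_, rfl⟩)
  simp only [mem_filter, mem_product, mem_compl, SimpleGraph.mem_edgeFinset,
    SimpleGraph.mem_edgeSet]
  exact ⟨⟨hfst, hsnd⟩, hadj⟩

lemma compl_eq_insert_of_union_eq_univ_erase (hdisj : Disjoint S T)
    (hST : S ∪ T = univ.erase w) : Sᶜ = insert w T := by
  rw [← union_sdiff_cancel_left hdisj, hST]
  ext u
  have := congr_arg (u ∈ ·) hST
  simp only [mem_union, mem_erase, mem_univ, and_true, eq_iff_iff] at this
  simp only [mem_compl, mem_insert, mem_sdiff, mem_erase, mem_univ, and_true]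
  tauto

lemma two_mul_le_two_mul_cutSize_add_degree (h : G.IsEdgeConnected k) (hdisj : Disjoint S T)
    (hST : S ∪ T = univ.erase w) (hS : S.Nonempty) (hT : T.Nonempty) :
    2 * k ≤ 2 * cutSize G.edgeFinset S T + G.degree w := by
  obtain ⟨hwS, hwT⟩ : w ∉ S ∧ w ∉ T := by
    rw [← notMem_union, hST]
    exact notMem_erase w univ
  obtain ⟨u, hu⟩ := hS
  obtain ⟨v, hv⟩ := hT
  have hcutS := le_cutSize_compl h hu hwS
  have hcutT := le_cutSize_compl h hv hwT
  rw [compl_eq_insert_of_union_eq_univ_erase hdisj hST, cutSize_insert_right _ _ hwT] at hcutS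
  rw [compl_eq_insert_of_union_eq_univ_erase hdisj.symm (union_comm S T ▸ hST),
    cutSize_insert_right _ _ hwS, cutSize_comm _ T S] at hcutT
  have hroot := cutSize_singleton_le (A := G.edgeFinset) (hST ▸ notMem_erase w univ)
  rw [cutSize_union_right _ _ hdisj, card_edgesAt_edgeFinset, cutSize_comm,
    cutSize_comm _ {w} T] at hroot
  lia

lemma linkedThrough_univ_erase (h : G.IsEdgeConnected 2) (hw : G.degree w ≤ 3) :
    LinkedThrough G.edgeFinset (univ.erase w) := by
  intro F F' hFE _ hF hF'
  by_contra! hlink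
  have hexists {D : Finset (Sym2 V)} (hD : D ⊆ G.edgeFinset) (hne : D.Nonempty) :
      ∃ u ∈ univ.erase w, (edgesAt D u).Nonempty := by
    obtain ⟨e, he⟩ := hne
    obtain ⟨u, hu, hue⟩ : ∃ u, u ≠ w ∧ u ∈ e := by
      induction e with | _ a b
      have hab : a ≠ b := G.not_isDiag_of_mem_edgeFinset (hD he)
      obtain rfl | ha := eq_or_ne a w
      exacts [⟨b, hab.symm, Sym2.mem_mk_right a b⟩, ⟨a, ha, Sym2.mem_mk_left a b⟩]
    exact ⟨u, mem_erase.2 ⟨hu, mem_univ u⟩, e, mem_edgesAt.2 ⟨he, hue⟩⟩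
  obtain ⟨u, hu, huF⟩ := hexists (hFE ▸ subset_union_left) hF
  obtain ⟨v, hv, hvF'⟩ := hexists (hFE ▸ subset_union_right) hF'
  have hcut := two_mul_le_two_mul_cutSize_add_degree h
    (disjoint_filter_filter_not (univ.erase w) (univ.erase w) fun u => (edgesAt F u).Nonempty)
    (filter_union_filter_not_eq _ _) ⟨u, mem_filter.2 ⟨hu, huF⟩⟩
    ⟨v, mem_filter.2 ⟨hv, fun hvF => hvF'.ne_empty (hlink v hv hvF)⟩⟩
  rw [← hFE, cutSize_eq_zero] at hcut
  · lia
  · intro u hu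
    exact hlink u (mem_filter.1 hu).1 (mem_filter.1 hu).2
  · intro u hu
    exact not_nonempty_iff_eq_empty.1 (mem_filter.1 hu).2

lemma isRootedSubcubic_univ_erase (h : G.IsEdgeConnected 2) (hcubic : G.IsRegularOfDegree 3)
    (w : V) : IsRootedSubcubic G.edgeFinset (univ.erase w) where
  not_isDiag _ := G.not_isDiag_of_mem_edgeFinset
  nonempty_edgesAt u _ := by
    rw [← card_pos, card_edgesAt_edgeFinset, hcubic u]
    exact Nat.zero_lt_succ 2
  card_edgesAt_le u _ := by rw [card_edgesAt_edgeFinset, hcubic u]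
  linkedThrough := linkedThrough_univ_erase h (hcubic w).le
  exists_root_edge := by
    obtain ⟨v, hv⟩ := (G.degree_pos_iff_exists_adj w).1 (hcubic w ▸ Nat.zero_lt_succ 2)
    exact ⟨s(w, v), by simpa using hv, w, by simp, by simp⟩

lemma isRootedThreeConnected_univ_erase (h : G.IsEdgeConnected 3)
    (hcubic : G.IsRegularOfDegree 3) (w : V) :
    IsRootedThreeConnected G.edgeFinset (univ.erase w) := by
  obtain ⟨v, hv⟩ := (G.degree_pos_iff_exists_adj w).1 (hcubic w ▸ Nat.zero_lt_succ 2)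
  have hvw : v ∈ univ.erase w := mem_erase.2 ⟨hv.ne', mem_univ v⟩
  have hdeg (u : V) : #(edgesAt G.edgeFinset u) = 3 := by rw [card_edgesAt_edgeFinset, hcubic u]
  refine ⟨fun u _ => Or.inr (hdeg u), ⟨v, hvw, hdeg v⟩, ?_, ?_⟩
  · exact (Nat.le_succ 2).trans (le_cutSize_compl (G := G) h hvw (notMem_erase w univ))
  · rintro S T hdisj hST ⟨x, hx, -⟩ ⟨y, hy, -⟩
    have hcut := two_mul_le_two_mul_cutSize_add_degree h hdisj hST ⟨x, hx⟩ ⟨y, hy⟩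
    rw [hcubic w] at hcut
    refine ⟨by lia, ?_⟩
    have hwT : w ∉ T := fun hwT => notMem_erase w univ (hST ▸ mem_union_right S hwT)
    have hroot : (univ.erase w)ᶜ = {w} := by simp
    rw [hroot, add_comm, ← cutSize_insert_right _ _ hwT,
      ← compl_eq_insert_of_union_eq_univ_erase hdisj hST]
    exact le_cutSize_compl h hx fun hwS => notMem_erase w univ (hST ▸ mem_union_left T hwS)

end EdgeConnected

lemma two_mul_card_edgeFinset {V : Type*} [Fintype V] {G : SimpleGraph V} [DecidableRel G.Adj]
    {k : ℕ} (hG : G.IsRegularOfDegree k) : 2 * #G.edgeFinset = k * Fintype.card V := by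
  rw [← G.sum_degrees_eq_twice_card_edges, sum_congr rfl fun v _ => hG v, sum_const, card_univ,
    smul_eq_mul, mul_comm]

lemma natCard_units_eq {K : Type*} [Field K] [Finite K] : (Nat.card Kˣ : ℤ) = Nat.card K - 1 := by
  rw [Nat.card_units, Nat.cast_sub Nat.card_pos, Nat.cast_one]

lemma aeval_aeval_two_sub_X {R : Type*} [CommRing R] (g : ℕ[X]) (x : R) :
    aeval x (aeval (2 - X : ℤ[X]) g) = aeval (2 - x) g := by
  rw [← AlgHom.restrictScalars_apply ℕ, ← aeval_algHom_apply, AlgHom.restrictScalars_apply,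
    map_sub, aeval_X, map_ofNat]

-- Both sides agree at every power of two, and a polynomial has finitely many roots.
lemma IsFlowExpansion.eq_X_sub_one_mul [Fintype V] {A : Finset (Sym2 V)} {U : Finset V} {g : ℕ[X]}
    {P : ℤ[X]} (h : IsFlowExpansion A U g)
    (hP : ∀ (K : Type) [Field K] [Fintype K] [CharP K 2],
      P.eval (Fintype.card K : ℤ) = flowCount K A U) :
    (-1) ^ (#A + #U + 1) * P = (X - 1) * aeval (2 - X) g := by
  have hinj : Injective fun k : ℕ => (2 : ℤ) ^ (k + 1) :=
    (pow_right_injective₀ zero_lt_two (by norm_num)).comp Nat.succ_injective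
  refine eq_of_infinite_eval_eq _ _ ((Set.infinite_range_of_injective hinj).mono ?_)
  rintro _ ⟨k, rfl⟩
  let K := GaloisField 2 (k + 1)
  have : Fintype K := Fintype.ofFinite K
  have hK : (Nat.card K : ℤ) = 2 ^ (k + 1) := by
    rw [GaloisField.card 2 (k + 1) k.succ_ne_zero, Nat.cast_pow, Nat.cast_ofNat]
  have hcount := h K
  rw [← hP, natCard_units_eq, ← Nat.card_eq_fintype_card, hK] at hcount
  simp only [Set.mem_ofPred_eq, eval_mul, eval_pow, eval_neg, eval_one, eval_sub, eval_X, hcount]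
  rw [← coe_aeval_eq_eval, aeval_aeval_two_sub_X,
    show (1 : ℤ) - (2 ^ (k + 1) - 1) = 2 - 2 ^ (k + 1) by ring]

theorem exists_flowPoly_eq {V : Type} [Fintype V] [Nonempty V] {G : SimpleGraph V}
    [DecidableRel G.Adj] (h : G.IsEdgeConnected 3) (hcubic : G.IsRegularOfDegree 3) :
    ∃ (g : ℕ[X]) (k : ℕ), 0 < g.coeff 0 ∧
      flowPoly G = (X - 1) * (X - 2) * ((-1) ^ k * aeval (2 - X) g) := by
  classical
  obtain ⟨w⟩ := ‹Nonempty V›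
  have hrooted := isRootedSubcubic_univ_erase (fun u v => (h u v).anti (Nat.le_succ 2)) hcubic w
  have hthree := isRootedThreeConnected_univ_erase h hcubic w
  obtain ⟨g, hg⟩ := exists_isPositiveFlowExpansion hrooted
  obtain ⟨v, hv, hv3⟩ := hthree.hasCubicVertex
  have hg0 := hg.isFlowExpansion.coeff_zero_eq_zero hv hv3
  have hexp := hg.isFlowExpansion.eq_X_sub_one_mul (P := flowPoly G) fun K _ _ _ => by
    rw [eval_flowPoly, flowCount_univ_erase hrooted.not_isDiag]
  refine ⟨g.divX, #G.edgeFinset + #(univ.erase w), ?_, ?_⟩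
  · exact coeff_divX (p := g) ▸ hg.coeff_one_pos hthree
  rw [← X_mul_divX_add g, hg0, C_0, add_zero, map_mul, aeval_X, pow_succ] at hexp
  obtain hsign | hsign := neg_one_pow_eq_or ℤ[X] (#G.edgeFinset + #(univ.erase w)) <;>
    rw [hsign] at hexp ⊢
  · linear_combination -hexp
  · linear_combination hexp

section RealRooted

lemma eq_one_of_sum_le_card_of_one_le_prod {s : Multiset ℝ} (hpos : ∀ u ∈ s, 0 < u)
    (hsum : s.sum ≤ Multiset.card s) (hprod : 1 ≤ s.prod) {u : ℝ} (hu : u ∈ s) : u = 1 := by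
  have hdefect : (s.map fun u => u - 1 - Real.log u).sum ≤ 0 := by
    rw [Multiset.sum_map_sub, Multiset.sum_map_sub, Multiset.map_id', Multiset.map_const',
      Multiset.sum_replicate, nsmul_one, ← Real.log_multiset_prod fun u hu => (hpos u hu).ne']
    linarith [Real.log_nonneg hprod]
  have hnonneg : ∀ x ∈ s.map fun u => u - 1 - Real.log u, 0 ≤ x := by
    intro x hx
    obtain ⟨v, hv, rfl⟩ := Multiset.mem_map.1 hx
    linarith [Real.log_le_sub_one_of_pos (hpos v hv)]
  have hle := (Multiset.single_le_sum hnonneg _ (Multiset.mem_map_of_mem _ hu)).trans hdefect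
  by_contra hne
  linarith [Real.log_lt_sub_one_of_pos (hpos u hu) hne]

lemma splits_of_forall_im_eq_zero {p : ℝ[X]} (h : ∀ z : ℂ, aeval z p = 0 → z.im = 0) :
    p.Splits := by
  refine Splits.of_splits_map (algebraMap ℝ ℂ) (IsAlgClosed.splits _) fun z hz => ?_
  have him := h z ((eval_map_algebraMap p z).symm.trans (isRoot_of_mem_roots hz))
  exact ⟨z.re, Complex.ext rfl him.symm⟩

lemma eq_X_sub_C_add_one_pow {q : ℝ[X]} {a : ℝ} (hmonic : q.Monic) (hsplits : q.Splits)
    (hroots : ∀ r ∈ q.roots, a < r) (hnext : -q.nextCoeff ≤ q.natDegree * (a + 1))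
    (heval : 1 ≤ |q.eval a|) : q = (X - C (a + 1)) ^ q.natDegree := by
  have hpos : ∀ u ∈ q.roots.map (· - a), 0 < u := by
    intro u hu
    obtain ⟨r, hr, rfl⟩ := Multiset.mem_map.1 hu
    exact sub_pos.2 (hroots r hr)
  have hsum : (q.roots.map (· - a)).sum ≤ Multiset.card (q.roots.map (· - a)) := by
    rw [hsplits.nextCoeff_eq_neg_sum_roots_of_monic hmonic] at hnext
    rw [Multiset.sum_map_sub, Multiset.map_id', Multiset.map_const', Multiset.sum_replicate,
      Multiset.card_map, ← hsplits.natDegree_eq_card_roots, nsmul_eq_mul]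
    linarith
  have hprod : 1 ≤ (q.roots.map (· - a)).prod := by
    rw [hsplits.eval_eq_prod_roots_of_monic hmonic] at heval
    refine heval.trans_eq ((map_multiset_prod (absHom : ℝ →*₀ ℝ) _).trans ?_)
    rw [Multiset.map_map]
    refine congr_arg _ (Multiset.map_congr rfl fun r hr => ?_)
    exact (abs_sub_comm a r).trans (abs_of_pos (sub_pos.2 (hroots r hr)))
  have hroots_eq : q.roots = Multiset.replicate q.natDegree (a + 1) := by
    refine Multiset.eq_replicate.2 ⟨hsplits.natDegree_eq_card_roots.symm, fun r hr => ?_⟩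
    have := eq_one_of_sum_le_card_of_one_le_prod hpos hsum hprod (Multiset.mem_map_of_mem _ hr)
    linarith
  conv_lhs => rw [hsplits.eq_prod_roots_of_monic hmonic, hroots_eq]
  rw [Multiset.map_replicate, Multiset.prod_replicate]

lemma coeff_zero_le_aeval (g : ℕ[X]) {x : ℝ} (hx : 0 ≤ x) : (g.coeff 0 : ℝ) ≤ aeval x g := by
  rw [← divX_mul_X_add g, map_add, map_mul, aeval_X]
  have : 0 ≤ aeval x g.divX := by
    rw [aeval_eq_sum_range]
    positivity
  simpa using mul_nonneg this hx

lemma one_le_abs_aeval {g : ℕ[X]} (hg : 0 < g.coeff 0) (k : ℕ) {x : ℝ} (hx : x ≤ 2) :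
    1 ≤ |aeval x ((-1) ^ k * aeval (2 - X) g : ℤ[X])| := by
  rw [map_mul, map_pow, map_neg, map_one, abs_mul, abs_neg_one_pow, one_mul,
    aeval_aeval_two_sub_X]
  exact (Nat.one_le_cast.2 hg).trans
    ((coeff_zero_le_aeval g (sub_nonneg.2 hx)).trans (le_abs_self _))

lemma eq_X_sub_three_pow {Q : ℤ[X]} (hmonic : Q.Monic)
    (hreal : ∀ z : ℂ, aeval z Q = 0 → z.im = 0) (habs : ∀ x : ℝ, x ≤ 2 → 1 ≤ |aeval x Q|)
    (hnext : Q.nextCoeff = -(3 * Q.natDegree)) : Q = (X - 3) ^ Q.natDegree := by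
  have hinj : Injective (algebraMap ℤ ℝ) := Int.cast_injective
  have haeval (x : ℝ) : (Q.map (algebraMap ℤ ℝ)).eval x = aeval x Q := eval_map_algebraMap Q x
  refine map_injective _ hinj ?_
  rw [eq_X_sub_C_add_one_pow (a := 2) (hmonic.map _)]
  · rw [natDegree_map_eq_of_injective hinj, two_add_one_eq_three, map_ofNat C]
    simp only [Polynomial.map_pow, Polynomial.map_sub, map_X, Polynomial.map_ofNat]
  · refine splits_of_forall_im_eq_zero fun z hz => hreal z ?_
    rwa [aeval_map_algebraMap] at hz
  · intro r hr
    by_contra! hle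
    have := habs r hle
    rw [← haeval, isRoot_of_mem_roots hr] at this
    norm_num at this
  · rw [nextCoeff_map hinj, natDegree_map_eq_of_injective hinj, hnext]
    simp only [algebraMap_int_eq, eq_intCast, Int.cast_neg, Int.cast_mul, Int.cast_ofNat,
      Int.cast_natCast]
    linarith
  · exact haeval 2 ▸ habs 2 le_rfl

end RealRooted

lemma cofactor_of_flowPoly_eq {V : Type} [Fintype V] [Nonempty V] {G : SimpleGraph V}
    [DecidableRel G.Adj] (h : G.IsEdgeConnected 3) (hcubic : G.IsRegularOfDegree 3) {Q : ℤ[X]}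
    (hfac : flowPoly G = (X - 1) * (X - 2) * Q) :
    Q.Monic ∧ Q.natDegree = Fintype.card V / 2 - 1 ∧ Q.nextCoeff = -(3 * Q.natDegree) := by
  classical
  replace hfac : flowPoly G = (X - C 1) * (X - C 2) * Q := hfac
  have htwo : G.IsEdgeConnected 2 := fun u v => (h u v).anti (Nat.le_succ 2)
  have hlin : ((X - C 1) * (X - C 2) : ℤ[X]).Monic := (monic_X_sub_C 1).mul (monic_X_sub_C 2)
  have hQ : Q.Monic := hlin.of_mul_monic_left (hfac ▸ monic_flowPoly htwo)
  have hdeg := natDegree_flowPoly htwo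
  rw [hfac, hlin.natDegree_mul hQ, (monic_X_sub_C 1).natDegree_mul (monic_X_sub_C 2),
    natDegree_X_sub_C, natDegree_X_sub_C] at hdeg
  have hnext := nextCoeff_flowPoly h (by lia)
  rw [hfac, hlin.nextCoeff_mul hQ, (monic_X_sub_C 1).nextCoeff_mul (monic_X_sub_C 2),
    nextCoeff_X_sub_C, nextCoeff_X_sub_C] at hnext
  have hrank := cycleRank_edgeFinset_add_card fun u v => (htwo u v).anti one_le_two
  have hedges := two_mul_card_edgeFinset hcubic
  exact ⟨hQ, by lia, by lia⟩

lemma roots_X_sub_one_mul_X_sub_two_mul_X_sub_three_pow (k : ℕ) :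
    ((X - 1) * (X - 2) * (X - 3) ^ k : ℝ[X]).roots = {1} + {2} + Multiset.replicate k 3 := by
  have hone : ((X - C 1) * (X - C 2) : ℝ[X]) ≠ 0 :=
    mul_ne_zero (X_sub_C_ne_zero 1) (X_sub_C_ne_zero 2)
  change ((X - C 1) * (X - C 2) * (X - C 3) ^ k : ℝ[X]).roots = _
  rw [roots_mul (mul_ne_zero hone (pow_ne_zero k (X_sub_C_ne_zero 3))), roots_mul hone, roots_pow,
    roots_X_sub_C, roots_X_sub_C, roots_X_sub_C, Multiset.nsmul_singleton]

lemma simple_roots_X_sub_one_mul_X_sub_two_mul_X_sub_three_pow {p : ℝ[X]} {k : ℕ}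
    (hp : p = (X - 1) * (X - 2) * (X - 3) ^ k) :
    rootMultiplicity 1 p = 1 ∧ rootMultiplicity 2 p = 1 ∧
      ∀ x : ℝ, p.IsRoot x → x ≠ 1 → x ≠ 2 → x = 3 := by
  have hroots := hp ▸ roots_X_sub_one_mul_X_sub_two_mul_X_sub_three_pow k
  refine ⟨?_, ?_, fun x hx hx1 hx2 => ?_⟩
  · simp [← count_roots, hroots, Multiset.count_replicate]
  · simp [← count_roots, hroots, Multiset.count_replicate]
  · have hp0 : p ≠ 0 := fun h => by simp [h] at hroots
    have hmem := (mem_roots hp0).2 hx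
    simp only [hroots, Multiset.mem_add, Multiset.mem_singleton, hx1, hx2, or_false,
      false_or] at hmem
    exact Multiset.eq_of_mem_replicate hmem

lemma isEdgeConnected_of_connected_deleteEdges {V : Type*} {G : SimpleGraph V} {k : ℕ}
    (h : ∀ S : Finset (Sym2 V), #S ≤ k → (G.deleteEdges ↑S).Connected) :
    G.IsEdgeConnected (k + 1) := by
  intro u v S hS
  obtain ⟨S, rfl⟩ := (Set.encard_lt_top_iff.1 (hS.trans (ENat.natCast_lt_top _))).exists_finset_coe
  rw [Set.encard_coe_eq_coe_finsetCard, Nat.cast_lt, Nat.lt_succ_iff] at hS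
  exact (h S hS).preconnected u v

theorem flowPoly_eq_of_forall_im_eq_zero {V : Type} [Fintype V] [Nonempty V] {G : SimpleGraph V}
    [DecidableRel G.Adj] (h3ec : G.IsEdgeConnected 3) (hcubic : G.IsRegularOfDegree 3)
    (hreal : ∀ z : ℂ, ((flowPoly G).map (Int.castRingHom ℂ)).IsRoot z → z.im = 0) :
    flowPoly G = (X - 1) * (X - 2) * (X - 3) ^ (Fintype.card V / 2 - 1) := by
  obtain ⟨g, k, hg, hfac⟩ := exists_flowPoly_eq h3ec hcubic
  set Q : ℤ[X] := (-1) ^ k * aeval (2 - X) g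
  obtain ⟨hmonic, hdeg, hnext⟩ := cofactor_of_flowPoly_eq h3ec hcubic hfac
  have hrealQ (z : ℂ) (hz : aeval z Q = 0) : z.im = 0 :=
    hreal z ((eval_map_algebraMap _ z).trans (by rw [hfac, map_mul, hz, mul_zero]))
  rw [hfac, ← hdeg, ← eq_X_sub_three_pow hmonic hrealQ (fun _ => one_le_abs_aeval hg k) hnext]

end FlowPolynomial

open FlowPolynomial in
/-- For a 3-edge-connected simple cubic graph with only real flow roots, `1` and `2`
are roots of the flow polynomial of multiplicity exactly `1`, and every other root is
strictly greater than `5/2`. -/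
theorem stmt_10 {V : Type} [Fintype V] (G : SimpleGraph V)
    (hconn : G.Connected)
    (h3ec : ∀ S : Finset (Sym2 V), S.card ≤ 2 → (G.deleteEdges ↑S).Connected)
    (hcubic : ∀ v : V, Nat.card (G.neighborSet v) = 3)
    (hreal : ∀ z : ℂ, ((flowPoly G).map (Int.castRingHom ℂ)).IsRoot z → z.im = 0)
    (p : Polynomial ℝ) (hp : p = (flowPoly G).map (Int.castRingHom ℝ)) :
    Polynomial.rootMultiplicity 1 p = 1 ∧ Polynomial.rootMultiplicity 2 p = 1 ∧
      ∀ x : ℝ, p.IsRoot x → x ≠ 1 → x ≠ 2 → 5 / 2 < x := by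
  classical
  have := hconn.nonempty
  have hregular : G.IsRegularOfDegree 3 := fun v => by
    rw [← hcubic v, Nat.card_eq_fintype_card, G.card_neighborSet_eq_degree]
  have h3 := isEdgeConnected_of_connected_deleteEdges h3ec
  rw [flowPoly_eq_of_forall_im_eq_zero h3 hregular hreal] at hp
  simp only [Polynomial.map_mul, Polynomial.map_sub, Polynomial.map_pow, map_X,
    Polynomial.map_one, Polynomial.map_ofNat] at hp
  obtain ⟨hone, htwo, hthree⟩ := simple_roots_X_sub_one_mul_X_sub_two_mul_X_sub_three_pow hp
  exact ⟨hone, htwo, fun x hx hx1 hx2 => by norm_num [hthree x hx hx1 hx2]⟩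
end

section
/- For every natural number s ≥ 0 and every i with 0 ≤ i ≤ s+3, the coefficient of t^i in the polynomial (t+1)(t+2)^s(t+3)^3 is strictly greater than the coefficient of t^i in the polynomial (t+1)(t+2)^{s+1}(t+3)^2 (both polynomials have degree s+4 and equal leading coefficient 1). -/
open Polynomial

/-!
Both products share the factor `q = (t + 1)(t + 2)^s(t + 3)^2`: one is `q (t + 2)` and the other
`q (t + 3)`, so their coefficients of `t^i` differ by exactly the coefficient of `t^i` in `q`, which
is positive for all `i ≤ deg q = s + 3` because `q` is a product of factors `t + a` with `a > 0`.
-/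

section Semiring

variable {R : Type*} [Semiring R] [PartialOrder R]

/-- A polynomial all of whose coefficients up to its degree are positive. The zero polynomial is
excluded, since its `natDegree` is `0`. -/
def HasPosCoeffs (p : R[X]) : Prop :=
  ∀ i ≤ p.natDegree, 0 < p.coeff i

namespace HasPosCoeffs

variable {p q : R[X]}

theorem leadingCoeff_pos (hp : HasPosCoeffs p) : 0 < p.leadingCoeff :=
  hp p.natDegree le_rfl

theorem coeff_nonneg (hp : HasPosCoeffs p) (i : ℕ) : 0 ≤ p.coeff i := by
  rcases le_or_gt i p.natDegree with hi | hi
  · exact (hp i hi).le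
  · exact (coeff_eq_zero_of_natDegree_lt hi).ge

variable [IsStrictOrderedRing R]

theorem natDegree_mul (hp : HasPosCoeffs p) (hq : HasPosCoeffs q) :
    (p * q).natDegree = p.natDegree + q.natDegree :=
  natDegree_mul' (mul_pos hp.leadingCoeff_pos hq.leadingCoeff_pos).ne'

theorem mul (hp : HasPosCoeffs p) (hq : HasPosCoeffs q) : HasPosCoeffs (p * q) := by
  intro i hi
  rw [hp.natDegree_mul hq] at hi
  obtain ⟨j, k, hj, hk, rfl⟩ : ∃ j k, j ≤ p.natDegree ∧ k ≤ q.natDegree ∧ j + k = i :=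
    ⟨min i p.natDegree, i - min i p.natDegree, by omega, by omega, by omega⟩
  rw [coeff_mul]
  exact Finset.sum_pos' (fun x _ ↦ mul_nonneg (hp.coeff_nonneg x.1) (hq.coeff_nonneg x.2))
    ⟨(j, k), Finset.HasAntidiagonal.mem_antidiagonal.mpr rfl, mul_pos (hp j hj) (hq k hk)⟩

theorem one : HasPosCoeffs (1 : R[X]) := by
  intro i hi
  obtain rfl : i = 0 := by simpa only [natDegree_one, Nat.le_zero] using hi
  rw [coeff_one_zero]
  exact one_pos

theorem pow (hp : HasPosCoeffs p) (n : ℕ) : HasPosCoeffs (p ^ n) := by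
  induction n with
  | zero => simpa only [pow_zero] using one
  | succ n ih => simpa only [pow_succ] using ih.mul hp

theorem X_add_C {a : R} (ha : 0 < a) : HasPosCoeffs (X + C a) := by
  intro i hi
  rw [natDegree_X_add_C] at hi
  interval_cases i
  · simpa using ha
  · simp

end HasPosCoeffs

theorem coeff_mul_X_add_C_lt [IsStrictOrderedRing R] {p : R[X]} {i : ℕ}
    {a b : R} (hp : 0 < p.coeff i) (hab : a < b) :
    (p * (X + C a)).coeff i < (p * (X + C b)).coeff i := by
  simp only [mul_add, coeff_add, coeff_mul_C]
  gcongr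

end Semiring

theorem stmt_14_general {R : Type*} [CommSemiring R] [PartialOrder R] [IsStrictOrderedRing R]
    {a b c : R} (ha : 0 < a) (hab : a < b) (hc : 0 < c) (s k : ℕ) :
    ∀ i ≤ s + k + 1,
      ((X + C c) * (X + C a) ^ (s + 1) * (X + C b) ^ k).coeff i <
        ((X + C c) * (X + C a) ^ s * (X + C b) ^ (k + 1)).coeff i := by
  intro i hi
  let q : R[X] := (X + C c) * (X + C a) ^ s * (X + C b) ^ k
  have hq : HasPosCoeffs q :=
    ((HasPosCoeffs.X_add_C hc).mul ((HasPosCoeffs.X_add_C ha).pow s)).mul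
      ((HasPosCoeffs.X_add_C (ha.trans hab)).pow k)
  have natDegree_q : q.natDegree = s + k + 1 := by
    have hmonic (x : R) (n : ℕ) : ((X + C x) ^ n).Monic := (monic_X_add_C x).pow n
    rw [((monic_X_add_C c).mul (hmonic a s)).natDegree_mul (hmonic b k),
      (monic_X_add_C c).natDegree_mul (hmonic a s), (monic_X_add_C a).natDegree_pow,
      (monic_X_add_C b).natDegree_pow]
    simp only [natDegree_X_add_C]
    ring
  calc
    _ = (q * (X + C a)).coeff i := by congr 1; ring
    _ < (q * (X + C b)).coeff i :=
      coeff_mul_X_add_C_lt (hq i (natDegree_q.symm ▸ hi)) hab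
    _ = _ := by congr 1; ring

/-- Each coefficient (below the leading one) of `(t+1)(t+2)^s(t+3)^3` strictly exceeds
the corresponding coefficient of `(t+1)(t+2)^{s+1}(t+3)^2`. -/
theorem stmt_14 (s : ℕ) :
    ∀ i ≤ s + 3,
      ((X + 1) * (X + 2) ^ (s + 1) * (X + 3) ^ 2 : Polynomial ℤ).coeff i <
        ((X + 1) * (X + 2) ^ s * (X + 3) ^ 3 : Polynomial ℤ).coeff i :=
  stmt_14_general (a := (2 : ℤ)) (b := 3) (c := 1) (by norm_num) (by norm_num) (by norm_num) s 2
end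

section
/- For every natural number s ≥ 0 and every i with 0 ≤ i ≤ s+5, the coefficient of t^i in the rational polynomial (t+1)(t+2)^s(t+5/2)^4 is greater than or equal to the coefficient of t^i in the polynomial (t+1)(t+2)^{s+2}(t+3)^2. -/
open Polynomial

/-! By AM-GM, `2 * 3 ≤ (5 / 2) ^ 2`, so `(t + 2) * (t + 3)` is bounded coefficientwise by
`(t + 5 / 2) ^ 2`. Coefficientwise bounds between polynomials with nonnegative coefficients survive
squaring and multiplication by `(t + 1) * (t + 2) ^ s`. -/

section OrderedSemiring

variable {R : Type*} [Semiring R] [PartialOrder R] [IsOrderedRing R] {p p' q q' : R[X]}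

variable (R) in
/-- The polynomials with nonnegative coefficients, on which multiplication is monotone for the
coefficientwise order. That order is written `p.coeff ≤ q.coeff`, comparing functions `ℕ → R`. -/
def nonnegCoeffs : Subsemiring R[X] where
  carrier := {p | 0 ≤ p.coeff}
  zero_mem' _ := by simp
  one_mem' i := by
    rw [coeff_one]
    split_ifs <;> simp
  add_mem' hp hq i := by
    rw [coeff_add]
    exact add_nonneg (hp i) (hq i)
  mul_mem' hp hq i := by
    rw [coeff_mul]
    exact Finset.sum_nonneg fun _ _ ↦ mul_nonneg (hp _) (hq _)

theorem mem_nonnegCoeffs : p ∈ nonnegCoeffs R ↔ 0 ≤ p.coeff := Iff.rfl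

theorem X_mem_nonnegCoeffs : (X : R[X]) ∈ nonnegCoeffs R := fun i ↦ by
  rw [coeff_X]
  split_ifs <;> simp

theorem C_mem_nonnegCoeffs {a : R} (ha : 0 ≤ a) : C a ∈ nonnegCoeffs R := fun i ↦ by
  rw [coeff_C]
  split_ifs <;> simp [ha]

theorem X_add_C_mem_nonnegCoeffs {a : R} (ha : 0 ≤ a) : X + C a ∈ nonnegCoeffs R :=
  add_mem X_mem_nonnegCoeffs (C_mem_nonnegCoeffs ha)

theorem coeff_mul_le_coeff_mul (hp : p.coeff ≤ p'.coeff) (hq : q.coeff ≤ q'.coeff)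
    (hq₀ : q ∈ nonnegCoeffs R) (hp₀ : p' ∈ nonnegCoeffs R) :
    (p * q).coeff ≤ (p' * q').coeff := fun i ↦ by
  simp only [coeff_mul]
  exact Finset.sum_le_sum fun _ _ ↦ mul_le_mul (hp _) (hq _) (hq₀ _) (hp₀ _)

theorem coeff_pow_le_coeff_pow (hp₀ : p ∈ nonnegCoeffs R) (hpq : p.coeff ≤ q.coeff) (n : ℕ) :
    (p ^ n).coeff ≤ (q ^ n).coeff := by
  have hq₀ : q ∈ nonnegCoeffs R := mem_nonnegCoeffs.2 (hp₀.trans hpq)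
  induction n with
  | zero => simp
  | succ n ih =>
    rw [pow_succ, pow_succ]
    exact coeff_mul_le_coeff_mul ih hpq hp₀ (pow_mem hq₀ n)

end OrderedSemiring

section LinearOrderedCommRing

variable {R : Type*} [CommRing R] [LinearOrder R] [IsStrictOrderedRing R] {a b m : R}

theorem mul_le_sq_of_add_le_two_mul (ha : 0 ≤ a) (hb : 0 ≤ b) (hm : a + b ≤ 2 * m) :
    a * b ≤ m ^ 2 := by
  refine le_of_mul_le_mul_left ?_ (zero_lt_four (α := R))
  calc
    4 * (a * b) = 4 * a * b := by ring
    _ ≤ (a + b) ^ 2 := four_mul_le_sq_add a b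
    _ ≤ (2 * m) ^ 2 := pow_le_pow_left₀ (add_nonneg ha hb) hm 2
    _ = 4 * m ^ 2 := by ring

theorem coeff_X_add_C_mul_X_add_C_le_coeff_sq (ha : 0 ≤ a) (hb : 0 ≤ b) (hm : a + b ≤ 2 * m) :
    ((X + C a) * (X + C b)).coeff ≤ ((X + C m) ^ 2).coeff := by
  have hsub : (X + C m) ^ 2 - (X + C a) * (X + C b) =
      C (2 * m - (a + b)) * X + C (m ^ 2 - a * b) := by
    simp only [map_sub, map_add, map_mul, map_pow, map_ofNat]
    ring
  have hmem : (X + C m) ^ 2 - (X + C a) * (X + C b) ∈ nonnegCoeffs R := by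
    rw [hsub]
    exact add_mem (mul_mem (C_mem_nonnegCoeffs (sub_nonneg.2 hm)) X_mem_nonnegCoeffs)
      (C_mem_nonnegCoeffs (sub_nonneg.2 (mul_le_sq_of_add_le_two_mul ha hb hm)))
  intro i
  simpa only [coeff_sub, Pi.zero_apply, sub_nonneg] using hmem i

theorem stmt_15_general {p : R[X]} (hp : p ∈ nonnegCoeffs R) (ha : 0 ≤ a) (hb : 0 ≤ b)
    (hm : a + b ≤ 2 * m) (n i : ℕ) :
    (p * ((X + C a) * (X + C b)) ^ n).coeff i ≤ (p * (X + C m) ^ (2 * n)).coeff i := by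
  have hab : (X + C a) * (X + C b) ∈ nonnegCoeffs R :=
    mul_mem (X_add_C_mem_nonnegCoeffs ha) (X_add_C_mem_nonnegCoeffs hb)
  rw [pow_mul]
  exact coeff_mul_le_coeff_mul le_rfl
    (coeff_pow_le_coeff_pow hab (coeff_X_add_C_mul_X_add_C_le_coeff_sq ha hb hm) n)
    (pow_mem hab n) hp i

end LinearOrderedCommRing

/-- Each coefficient of `(t+1)(t+2)^{s+2}(t+3)^2` is at most the corresponding
coefficient of `(t+1)(t+2)^s(t+5/2)^4`. -/
theorem stmt_15 (s : ℕ) :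
    ∀ i ≤ s + 5,
      ((X + 1) * (X + 2) ^ (s + 2) * (X + 3) ^ 2 : Polynomial ℚ).coeff i ≤
        ((X + 1) * (X + 2) ^ s * (X + C (5 / 2 : ℚ)) ^ 4 : Polynomial ℚ).coeff i := by
  intro i _
  have hp : ((X + 1) * (X + 2) ^ s : ℚ[X]) ∈ nonnegCoeffs ℚ :=
    mul_mem (X_add_C_mem_nonnegCoeffs zero_le_one)
      (pow_mem (X_add_C_mem_nonnegCoeffs zero_le_two) s)
  have hfactor : ((X + 1) * (X + 2) ^ (s + 2) * (X + 3) ^ 2 : ℚ[X]) =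
      (X + 1) * (X + 2) ^ s * ((X + C 2) * (X + C 3)) ^ 2 := by
    simp only [map_ofNat]
    ring
  rw [hfactor]
  exact stmt_15_general hp zero_le_two zero_le_three (by norm_num) 2 i
end

section
/- Let G be a connected bridgeless finite simple graph with n vertices and m = n+1 edges. Then its flow polynomial satisfies F(G,t) = (t−1)^2 or F(G,t) = (t−1)(t−2). -/
open Polynomial

/-!
Over `𝔽₂`, the cycle space of a spanning subgraph `Z` has dimension `|Z| + c(Z) - n`. For
`Z = E ∖ A` it is cut out of the cycle space `W` of `G` by the vanishing of the coordinates at the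
edges of `A`, so the exponent of `t` in `F(G,t)` is the codimension in `W*` of the span of these
coordinate functionals. Functionals that repeat can be merged without changing the alternating sum.
Here `W*` is a plane over `𝔽₂`, the functionals are nonzero because `G` is bridgeless, and they span
`W*`: there are two or three distinct ones, and any two of them form a basis.
-/

open Module Finset

lemma sum_powerset_neg_one_pow_smul_insert {β M : Type*} [AddCommGroup M] [DecidableEq β]
    {T : Finset β} {p : β} (hp : p ∈ T) (f : Finset β → M) :
    ∑ S ∈ T.powerset, (-1 : ℤ) ^ #S • f (insert p S) = 0 := by
  obtain ⟨T', hpT', rfl⟩ : ∃ T', p ∉ T' ∧ insert p T' = T :=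
    ⟨T.erase p, notMem_erase p T, insert_erase hp⟩
  rw [sum_powerset_insert hpT', ← sum_add_distrib]
  refine sum_eq_zero fun S hS ↦ ?_
  rw [card_insert_of_notMem (notMem_mono (mem_powerset.1 hS) hpT'), insert_idem, ← add_smul]
  simp [pow_succ]

lemma sum_powerset_neg_one_pow_smul_image {α β M : Type*} [AddCommGroup M] [DecidableEq β]
    (c : α → β) (E : Finset α) (f : Finset β → M) :
    ∑ A ∈ E.powerset, (-1 : ℤ) ^ #A • f (A.image c) =
      ∑ S ∈ (E.image c).powerset, (-1 : ℤ) ^ #S • f S := by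
  classical
  induction E using Finset.induction_on generalizing f with
  | empty => simp
  | insert e E he ih =>
    have card_insert_subset : ∀ A ∈ E.powerset, #(insert e A) = #A + 1 := fun A hA ↦
      card_insert_of_notMem (notMem_mono (mem_powerset.1 hA) he)
    have split : ∑ A ∈ (insert e E).powerset, (-1 : ℤ) ^ #A • f (A.image c) =
        ∑ S ∈ (E.image c).powerset, (-1 : ℤ) ^ #S • f S -
          ∑ S ∈ (E.image c).powerset, (-1 : ℤ) ^ #S • f (insert (c e) S) := by
      rw [sum_powerset_insert he, ← ih, ← ih fun S ↦ f (insert (c e) S), sub_eq_add_neg,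
        ← sum_neg_distrib]
      congr 1
      refine sum_congr rfl fun A hA ↦ ?_
      rw [card_insert_subset A hA, image_insert, pow_succ, mul_neg_one, neg_smul]
    rw [split, image_insert]
    by_cases hce : c e ∈ E.image c
    · rw [sum_powerset_neg_one_pow_smul_insert hce, sub_zero, insert_eq_of_mem hce]
    · rw [sum_powerset_insert hce, sub_eq_add_neg, ← sum_neg_distrib]
      congr 1
      refine sum_congr rfl fun S hS ↦ ?_
      rw [card_insert_of_notMem (notMem_mono (mem_powerset.1 hS) hce), pow_succ, mul_neg_one,
        neg_smul]

lemma sum_powerset_neg_one_pow_smul_pow_two_sub_card {β A : Type*} [CommRing A] {T : Finset β}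
    (hT : T.Nonempty) (t : A) :
    ∑ S ∈ T.powerset, (-1 : ℤ) ^ #S • t ^ (2 - #S) = (t - 1) * (t + 1 - #T) := by
  have subtract_one : ∑ S ∈ T.powerset, (-1 : ℤ) ^ #S • t ^ (2 - #S) =
      ∑ S ∈ T.powerset, (-1 : ℤ) ^ #S • (t ^ (2 - #S) - 1) := by
    simp only [smul_sub, sum_sub_distrib, ← sum_smul,
      sum_powerset_neg_one_pow_card_of_nonempty hT, zero_smul, sub_zero]
  obtain ⟨k, hk⟩ : ∃ k, #T = k + 1 := Nat.exists_eq_succ_of_ne_zero hT.card_ne_zero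
  rw [subtract_one, sum_powerset_apply_card fun j ↦ (-1 : ℤ) ^ j • (t ^ (2 - j) - 1), hk,
    sum_range_succ', sum_range_succ', sum_eq_zero fun j _ ↦ by simp]
  simp only [zero_add, Nat.choose_zero_right, Nat.choose_one_right, Nat.add_one_sub_one, tsub_zero,
    pow_zero, pow_one, one_smul, neg_smul, nsmul_eq_mul]
  push_cast
  ring

section Relations

variable (R : Type*) {ι M : Type*} [CommRing R] [AddCommGroup M] [Module R M] (v : ι → M)

/-- The linear relations among the vectors `v i` that involve only indices in `s`. They all live in
`ι →₀ R`, so that the relations on a subset of `s` form a submodule of those on `s`. -/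
noncomputable def relations (s : Set ι) : Submodule R (ι →₀ R) :=
  Finsupp.supported R R s ⊓ LinearMap.ker (Finsupp.linearCombination R v)

/-- The coefficient of a relation at the index `i`, as a linear functional. -/
noncomputable def relationCoord (s : Set ι) (i : ι) : Dual R (relations R v s) :=
  (Finsupp.lapply i).domRestrict (relations R v s)

variable {R v}

lemma relationCoord_apply {s : Set ι} {i : ι} (x : relations R v s) :
    relationCoord R v s i x = x.1 i := rfl

lemma mem_relations {s : Set ι} {x : ι →₀ R} :
    x ∈ relations R v s ↔ (∀ i ∉ s, x i = 0) ∧ Finsupp.linearCombination R v x = 0 := by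
  rw [relations, Submodule.mem_inf, Finsupp.mem_supported', LinearMap.mem_ker]

lemma relationCoord_ne_zero [Nontrivial R] {s : Set ι} {i : ι} (hi : i ∈ s)
    (hspan : v i ∈ Submodule.span R (v '' (s \ {i}))) : relationCoord R v s i ≠ 0 := by
  obtain ⟨x, hx, hxi⟩ := (Finsupp.mem_span_image_iff_linearCombination R).1 hspan
  rw [Finsupp.mem_supported'] at hx
  have mem : Finsupp.single i 1 - x ∈ relations R v s := by
    refine mem_relations.2 ⟨fun j hj ↦ ?_, by simp [hxi]⟩
    rw [Finsupp.sub_apply, hx j fun h ↦ hj h.1,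
      Finsupp.single_eq_of_ne (ne_of_mem_of_not_mem hi hj).symm, sub_zero]
  have coord_eq_one : relationCoord R v s i ⟨_, mem⟩ = 1 := by
    simp [relationCoord_apply, hx i (by simp)]
  intro h
  simp [h] at coord_eq_one

variable (R v)

lemma map_subtype_dualCoannihilator_span_relationCoord (s t : Set ι) :
    (Submodule.span R (relationCoord R v s '' t)).dualCoannihilator.map (relations R v s).subtype =
      relations R v (s \ t) := by
  have mem_coannihilator (x : relations R v s) :
      x ∈ (Submodule.span R (relationCoord R v s '' t)).dualCoannihilator ↔ ∀ i ∈ t, x.1 i = 0 := by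
    rw [← SetLike.mem_coe, Submodule.coe_dualCoannihilator_span, Set.mem_ofPred_eq,
      Set.forall_mem_image]
    rfl
  ext x
  simp only [Submodule.mem_map, mem_coannihilator, Submodule.subtype_apply, Subtype.exists,
    exists_and_right, exists_eq_right, mem_relations]
  grind

end Relations

section FinrankRelations

variable (K : Type*) {ι M : Type*} [Field K] [AddCommGroup M] [Module K M] (v : ι → M)

lemma finrank_relations_add_finrank_span (s : Finset ι) :
    finrank K (relations K v s) + finrank K (Submodule.span K (v '' s)) = #s := by
  let coeffs : Finsupp.supported K K (s : Set ι) ≃ₗ[K] (s →₀ K) := Finsupp.supportedEquivFinsupp _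
  have : FiniteDimensional K (Finsupp.supported K K (s : Set ι)) := Module.Finite.equiv coeffs.symm
  have rank_nullity := LinearMap.finrank_range_add_finrank_ker
    (V := Finsupp.supported K K (s : Set ι)) ((Finsupp.linearCombination K v).domRestrict _)
  rwa [LinearMap.range_domRestrict, ← Finsupp.span_image_eq_map_linearCombination,
    LinearMap.ker_domRestrict, ← Submodule.finrank_map_subtype_eq, Submodule.map_comap_subtype,
    coeffs.finrank_eq, finrank_finsupp_self, Fintype.card_coe, add_comm] at rank_nullity

lemma finrank_relations_sdiff_add_finrank_span (s t : Set ι)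
    [FiniteDimensional K (relations K v s)] :
    finrank K (relations K v (s \ t)) + finrank K (Submodule.span K (relationCoord K v s '' t)) =
      finrank K (relations K v s) := by
  rw [← map_subtype_dualCoannihilator_span_relationCoord, Submodule.finrank_map_subtype_eq,
    add_comm]
  exact Subspace.finrank_add_finrank_dualCoannihilator_eq (V := relations K v s) _

lemma finrank_span_relationCoord (s : Set ι) [FiniteDimensional K (relations K v s)] :
    finrank K (Submodule.span K (relationCoord K v s '' s)) = finrank K (relations K v s) := by
  have no_relations : relations K v (s \ s) = ⊥ := by
    rw [Set.sdiff_self, relations, Finsupp.supported_empty, bot_inf_eq]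
  rw [← finrank_relations_sdiff_add_finrank_span K v s s, no_relations, finrank_bot, zero_add]

end FinrankRelations

section ZModTwo

variable {W : Type*} [AddCommGroup W] [Module (ZMod 2) W]

lemma linearIndependent_pair_zmod_two {x y : W} (hx : x ≠ 0) (hy : y ≠ 0) (hxy : x ≠ y) :
    LinearIndependent (ZMod 2) ![x, y] := by
  rw [LinearIndependent.pair_iff' hx]
  intro a
  obtain rfl | rfl : a = 0 ∨ a = 1 := by decide +revert
  · rwa [zero_smul, ne_comm]
  · rwa [one_smul]

lemma finrank_span_eq_min_card_two [FiniteDimensional (ZMod 2) W] (hW : finrank (ZMod 2) W ≤ 2)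
    {S : Finset W} (hS : 0 ∉ S) :
    finrank (ZMod 2) (Submodule.span (ZMod 2) (S : Set W)) = min #S 2 := by
  rcases lt_or_ge 1 #S with hlt | hle
  · obtain ⟨x, hx, y, hy, hxy⟩ := one_lt_card.1 hlt
    have two_le : 2 ≤ finrank (ZMod 2) (Submodule.span (ZMod 2) (S : Set W)) := by
      have basis := finrank_span_eq_card (linearIndependent_pair_zmod_two
        (ne_of_mem_of_not_mem hx hS) (ne_of_mem_of_not_mem hy hS) hxy)
      rw [Matrix.range_cons_cons_empty, Fintype.card_fin] at basis
      exact basis.ge.trans <| Submodule.finrank_mono (Submodule.span_mono (by grind))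
    rw [min_eq_right hlt]
    exact le_antisymm ((Submodule.finrank_le _).trans hW) two_le
  · rcases card_le_one_iff_subset_singleton.1 hle with ⟨x, hx⟩
    rcases subset_singleton_iff.1 hx with rfl | rfl
    · simp
    · rw [coe_singleton, finrank_span_singleton (by simpa [eq_comm] using hS)]
      simp

lemma card_eq_two_or_three_of_finrank_span_eq_two (hW : finrank (ZMod 2) W = 2) {S : Finset W}
    (hS : 0 ∉ S) (hspan : finrank (ZMod 2) (Submodule.span (ZMod 2) (S : Set W)) = 2) :
    #S = 2 ∨ #S = 3 := by
  classical
  have : FiniteDimensional (ZMod 2) W := FiniteDimensional.of_finrank_pos (by omega)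
  have : Finite W := Module.finite_of_finite (ZMod 2)
  have : Fintype W := Fintype.ofFinite W
  have card_le_four := card_le_univ (insert 0 S)
  rw [card_insert_of_notMem hS, Module.card_eq_pow_finrank (K := ZMod 2), hW, ZMod.card]
    at card_le_four
  have two_le_card : 2 ≤ #S := hspan.ge.trans (finrank_span_finset_le_card S)
  omega

lemma sum_powerset_pow_sub_finrank_span [DecidableEq W] {α A : Type*} [CommRing A]
    (hW : finrank (ZMod 2) W = 2) {c : α → W} {E : Finset α} (hE : E.Nonempty)
    (hc : 0 ∉ E.image c) (t : A) :
    ∑ B ∈ E.powerset,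
        (-1 : ℤ) ^ #B • t ^ (2 - finrank (ZMod 2) (Submodule.span (ZMod 2) (c '' B))) =
      (t - 1) * (t + 1 - #(E.image c)) := by
  have : FiniteDimensional (ZMod 2) W := FiniteDimensional.of_finrank_pos (by omega)
  rw [← sum_powerset_neg_one_pow_smul_pow_two_sub_card (hE.image c),
    ← sum_powerset_neg_one_pow_smul_image c E fun S ↦ t ^ (2 - #S)]
  refine sum_congr rfl fun B hB ↦ ?_
  have zero_notMem : 0 ∉ B.image c := notMem_mono (image_subset_image (mem_powerset.1 hB)) hc
  rw [← coe_image, finrank_span_eq_min_card_two hW.le zero_notMem, min_comm, tsub_min]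

end ZModTwo

section CycleSpace

variable {V : Type*}

/-- The column of the incidence matrix of a graph at the edge `e = s(u, v)`, over `𝔽₂`, encoded as
the functional `f ↦ f u + f v`; it vanishes if `e` is a loop. -/
def endpointSum : Sym2 V → Dual (ZMod 2) (V → ZMod 2) :=
  Sym2.lift ⟨fun u v ↦ LinearMap.proj u + LinearMap.proj v, fun _ _ ↦ add_comm _ _⟩

lemma endpointSum_apply (u v : V) (f : V → ZMod 2) : endpointSum s(u, v) f = f u + f v := rfl

lemma endpointSum_apply_eq_zero_iff {u v : V} {f : V → ZMod 2} :
    endpointSum s(u, v) f = 0 ↔ f u = f v := by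
  rw [endpointSum_apply, CharTwo.add_eq_zero]

lemma endpointSum_mem_span_of_reachable {H : SimpleGraph V} {u v : V} (h : H.Reachable u v) :
    endpointSum s(u, v) ∈ Submodule.span (ZMod 2) (endpointSum '' H.edgeSet) := by
  obtain ⟨p⟩ := h
  induction p with
  | @nil u =>
    have loop : endpointSum s(u, u) = 0 :=
      LinearMap.ext fun f ↦ endpointSum_apply_eq_zero_iff.2 rfl
    rw [loop]
    exact zero_mem _
  | @cons u v w hadj _ ih =>
    have telescope : endpointSum s(u, w) = endpointSum s(u, v) + endpointSum s(v, w) := by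
      refine LinearMap.ext fun f ↦ ?_
      simp only [LinearMap.add_apply, endpointSum_apply]
      linear_combination -CharTwo.add_self_eq_zero (f v)
    rw [telescope]
    exact add_mem (Submodule.subset_span ⟨_, hadj, rfl⟩) ih

lemma dualCoannihilator_span_endpointSum (Z : Set (Sym2 V)) :
    (Submodule.span (ZMod 2) (endpointSum '' Z)).dualCoannihilator =
      LinearMap.range (LinearMap.funLeft (ZMod 2) (ZMod 2)
        (SimpleGraph.fromEdgeSet Z).connectedComponentMk) := by
  refine le_antisymm (fun f hf ↦ ?_) ?_
  · have constant : ∀ u v, (SimpleGraph.fromEdgeSet Z).Reachable u v → f u = f v := by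
      intro u v huv
      refine endpointSum_apply_eq_zero_iff.1 ((Submodule.mem_dualCoannihilator f).1 hf _ ?_)
      refine Submodule.span_mono (Set.image_mono ?_) (endpointSum_mem_span_of_reachable huv)
      simp [SimpleGraph.edgeSet_fromEdgeSet]
    exact ⟨SimpleGraph.ConnectedComponent.lift f fun u v p _ ↦ constant u v p.reachable, rfl⟩
  · rintro _ ⟨g, rfl⟩
    rw [← SetLike.mem_coe, Submodule.coe_dualCoannihilator_span, Set.mem_ofPred_eq,
      Set.forall_mem_image]
    intro e he
    induction e with | h u v =>
    rw [endpointSum_apply_eq_zero_iff, LinearMap.funLeft_apply, LinearMap.funLeft_apply]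
    rcases eq_or_ne u v with rfl | huv
    · rfl
    · have adj : (SimpleGraph.fromEdgeSet Z).Adj u v := (SimpleGraph.fromEdgeSet_adj Z).2 ⟨he, huv⟩
      rw [SimpleGraph.ConnectedComponent.eq.2 adj.reachable]

lemma finrank_span_endpointSum_add_card_connectedComponent [Fintype V] (Z : Set (Sym2 V)) :
    finrank (ZMod 2) (Submodule.span (ZMod 2) (endpointSum '' Z)) +
      Nat.card (SimpleGraph.fromEdgeSet Z).ConnectedComponent = Fintype.card V := by
  have := Fintype.ofFinite (SimpleGraph.fromEdgeSet Z).ConnectedComponent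
  have components : finrank (ZMod 2)
      (Submodule.span (ZMod 2) (endpointSum '' Z)).dualCoannihilator =
      Nat.card (SimpleGraph.fromEdgeSet Z).ConnectedComponent := by
    have mk_surjective : Function.Surjective (SimpleGraph.fromEdgeSet Z).connectedComponentMk :=
      Quot.mk_surjective
    rw [dualCoannihilator_span_endpointSum, LinearMap.finrank_range_of_inj
      (LinearMap.funLeft_injective_of_surjective _ _ _ mk_surjective),
      finrank_fintype_fun_eq_card, Nat.card_eq_fintype_card]
  rw [← components, Subspace.finrank_add_finrank_dualCoannihilator_eq, finrank_fintype_fun_eq_card]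

/-- The cycle space over `𝔽₂` of the graph with edge set `Z`. -/
noncomputable abbrev cycleSpace (Z : Set (Sym2 V)) : Submodule (ZMod 2) (Sym2 V →₀ ZMod 2) :=
  relations (ZMod 2) endpointSum Z

/-- The coefficient of an element of the cycle space at the edge `e`, as a linear functional. -/
noncomputable abbrev cycleCoord (Z : Set (Sym2 V)) (e : Sym2 V) : Dual (ZMod 2) (cycleSpace Z) :=
  relationCoord (ZMod 2) endpointSum Z e

lemma finrank_cycleSpace_add_card [Fintype V] (Z : Finset (Sym2 V)) :
    finrank (ZMod 2) (cycleSpace (Z : Set (Sym2 V))) + Fintype.card V =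
      #Z + Nat.card (SimpleGraph.fromEdgeSet (Z : Set (Sym2 V))).ConnectedComponent := by
  have nullity := finrank_relations_add_finrank_span (ZMod 2) endpointSum Z
  rw [← finrank_span_endpointSum_add_card_connectedComponent (Z : Set (Sym2 V)), ← add_assoc,
    ← nullity]

lemma cycleCoord_ne_zero {G : SimpleGraph V} {e : Sym2 V} (he : e ∈ G.edgeSet)
    (hbridge : ¬ G.IsBridge e) : cycleCoord G.edgeSet e ≠ 0 := by
  refine relationCoord_ne_zero he ?_
  rw [← SimpleGraph.edgeSet_deleteEdges]
  induction e with | h u v =>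
  exact endpointSum_mem_span_of_reachable (not_not.1 hbridge)

end CycleSpace

lemma card_connectedComponent_eq_one {V : Type*} {G : SimpleGraph V} (hconn : G.Connected) :
    Nat.card G.ConnectedComponent = 1 := by
  have := hconn.nonempty
  exact Nat.card_eq_one_iff_unique.2
    ⟨hconn.preconnected.subsingleton_connectedComponent, inferInstance⟩

lemma flowPoly_eq_sum_powerset_cycleCoord {V : Type} [Fintype V] (G : SimpleGraph V) :
    flowPoly G = ∑ A ∈ G.edgeSet.toFinite.toFinset.powerset, (-1 : ℤ) ^ #A •
      (X : ℤ[X]) ^ (finrank (ZMod 2) (cycleSpace G.edgeSet) -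
        finrank (ZMod 2) (Submodule.span (ZMod 2) (cycleCoord G.edgeSet '' A))) := by
  classical
  rw [flowPoly]
  set E := G.edgeSet.toFinite.toFinset
  have coe_E : (E : Set (Sym2 V)) = G.edgeSet := Set.Finite.coe_toFinset _
  refine sum_bij' (fun Z _ ↦ E \ Z) (fun A _ ↦ E \ A) (by simp) (by simp)
    (fun Z hZ ↦ Finset.sdiff_sdiff_eq_self (mem_powerset.1 hZ))
    (fun A hA ↦ Finset.sdiff_sdiff_eq_self (mem_powerset.1 hA)) fun Z hZ ↦ ?_
  have hZE : Z ⊆ E := mem_powerset.1 hZ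
  have corank := finrank_relations_sdiff_add_finrank_span (ZMod 2) endpointSum
    (E : Set (Sym2 V)) ↑(E \ Z)
  rw [← coe_sdiff, Finset.sdiff_sdiff_eq_self hZE, coe_E] at corank
  rw [← finrank_cycleSpace_add_card, Nat.add_sub_cancel, card_sdiff_of_subset hZE,
    ← corank, Nat.add_sub_cancel]

theorem stmt_16_general {V : Type} [Fintype V] (G : SimpleGraph V)
    (hbridgeless : ∀ e ∈ G.edgeSet, ¬ G.IsBridge e)
    (hm : edgeCount G + Nat.card G.ConnectedComponent = Fintype.card V + 2) :
    flowPoly G = (X - 1) ^ 2 ∨ flowPoly G = (X - 1) * (X - 2) := by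
  classical
  let E := G.edgeSet.toFinite.toFinset
  have coe_E : (E : Set (Sym2 V)) = G.edgeSet := G.edgeSet.toFinite.coe_toFinset
  have finrank_cycleSpace : finrank (ZMod 2) (cycleSpace G.edgeSet) = 2 := by
    have finrank_add_card := finrank_cycleSpace_add_card E
    rw [coe_E, SimpleGraph.fromEdgeSet_edgeSet, ← edgeCount, hm] at finrank_add_card
    omega
  have finrank_dual : finrank (ZMod 2) (Dual (ZMod 2) (cycleSpace G.edgeSet)) = 2 := by
    rw [Subspace.dual_finrank_eq, finrank_cycleSpace]
  have zero_notMem : 0 ∉ E.image (cycleCoord G.edgeSet) := by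
    simpa [E] using fun e he ↦ cycleCoord_ne_zero he (hbridgeless e he)
  have finrank_span : finrank (ZMod 2) (Submodule.span (ZMod 2)
      (E.image (cycleCoord G.edgeSet) : Set (Dual (ZMod 2) (cycleSpace G.edgeSet)))) = 2 := by
    rw [coe_image, coe_E, finrank_span_relationCoord, finrank_cycleSpace]
  have card_image :=
    card_eq_two_or_three_of_finrank_span_eq_two finrank_dual zero_notMem finrank_span
  have E_nonempty : E.Nonempty := by
    rw [← image_nonempty (f := cycleCoord G.edgeSet), ← card_pos]
    omega
  rw [flowPoly_eq_sum_powerset_cycleCoord, finrank_cycleSpace,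
    sum_powerset_pow_sub_finrank_span finrank_dual E_nonempty zero_notMem]
  refine card_image.imp (fun h ↦ ?_) fun h ↦ ?_ <;> (rw [h]; push_cast; ring)

/-- A connected bridgeless simple graph with `m = n + 1` has flow polynomial
`(t−1)²` or `(t−1)(t−2)`. -/
theorem stmt_16 {V : Type} [Fintype V] (G : SimpleGraph V)
    (hconn : G.Connected) (hbridgeless : ∀ e : Sym2 V, ¬ G.IsBridge e)
    (hm : edgeCount G = Fintype.card V + 1) :
    flowPoly G = (X - 1) ^ 2 ∨ flowPoly G = (X - 1) * (X - 2) := by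
  exact stmt_16_general G (fun e _ ↦ hbridgeless e)
    (by rw [card_connectedComponent_eq_one hconn, hm])
end
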